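/- arXiv:1409.3694 — 8 statements merged into one kernel-verified Lean document; each statement's English description precedes it below -/
import Mathlib

section
/- Let q be an even prime power, let α₁, …, α_r ∈ 𝔽_q[x] be distinct polynomials of degree at most 1, α_i = a_i x + b_i, and let ε₁, …, ε_r ∈ {1, 2}. If A_γ ≠ ∅, i.e. there exists a ∈ A with Σ_{i : a_i = a} ε_i odd, then |C(α₁, …, α_r; 2)| < r·q. -/
/-!
In characteristic two, `X² + sX + t` is a square when `s = 0`, and when `s ≠ 0` it is squarefree and
splits exactly when `t / s²` lies in the subgroup `H = {y² + y}`. Since `y ↦ y² + y` is additive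
with kernel `{0, 1}`, `H` has index two, so `μ (X² + sX + t) = χ (t / s²)` with `χ` the nontrivial
additive character that is trivial on `H` (`polyMoebius_quadratic`).

Hence, writing `F = X² + uX + v`, only those `u` contribute for which no `u + a_j` vanishes, and for
such `u` the sum over `v` is a constant times `∑_v χ (S v)` with `S = ∑_j ε_j / (u + a_j)²`. It
vanishes unless `S = 0`, that is, unless `∑_j ε_j / (u + a_j) = 0`, as `S` is the square of this sum.
Clearing denominators, such `u` are roots of `∑_j ε_j ∏_{c ∈ A \ {a_j}} (X + c)`, which has degree
less than `#A ≤ r` and is nonzero because it does not vanish at any `c ∈ A_γ` (`card_bad_lt`). So at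
most `r - 1` values of `u` contribute, each at most `q` in absolute value.
-/

open Polynomial
open scoped Classical

/-- The Möbius function of a polynomial over a finite field. -/
noncomputable def polyMoebius {Fq : Type*} [Field Fq] (F : Polynomial Fq) : ℤ :=
  if Squarefree F then (-1) ^ Multiset.card (UniqueFactorizationMonoid.factors F) else 0

/-- The autocorrelation sum `C(α₁, …, α_r; n)`. -/
noncomputable def Csum {Fq : Type*} [Field Fq] [Fintype Fq] (n r : ℕ)
    (α : Fin r → Polynomial Fq) (ε : Fin r → ℕ) : ℤ :=
  ∑ a : Fin n → Fq, ∏ j : Fin r,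
    (polyMoebius (X ^ n + (∑ i : Fin n, C (a i) * X ^ (i : ℕ)) + α j)) ^ (ε j)

section Moebius

variable {K : Type*} [Field K]

/-- The Möbius value of a squarefree polynomial can be read off from any factorization into
irreducibles. -/
lemma polyMoebius_of_factorization {F : K[X]} (hF : Squarefree F) (m : Multiset K[X])
    (hm : ∀ p ∈ m, Irreducible p) (hprod : m.prod = F) :
    polyMoebius F = (-1) ^ Multiset.card m := by
  have hrel := UniqueFactorizationMonoid.factors_unique
    (f := UniqueFactorizationMonoid.factors F) (g := m)
    (fun p hp => UniqueFactorizationMonoid.irreducible_of_factor p hp) hm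
    (by rw [hprod]; exact UniqueFactorizationMonoid.factors_prod hF.ne_zero)
  rw [polyMoebius, if_pos hF, Multiset.card_eq_card_of_rel hrel]

lemma irreducible_X_add_C (c : K) : Irreducible (X + C c) :=
  irreducible_of_degree_eq_one (degree_X_add_C c)

/-- The additive map `y ↦ y² + y` in characteristic two. -/
def artinSchreier (K : Type*) [Field K] [CharP K 2] : K →+ K where
  toFun y := y ^ 2 + y
  map_zero' := by simp
  map_add' x y := by rw [CharTwo.add_sq]; ring

variable [Finite K] [CharP K 2]

lemma artinSchreier_range_index : (artinSchreier K).range.index = 2 := by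
  have hker : ((artinSchreier K).ker : Set K) = {0, 1} := by
    ext y
    simp only [SetLike.mem_coe, AddMonoidHom.mem_ker, artinSchreier, AddMonoidHom.coe_mk,
      ZeroHom.coe_mk, Set.mem_insert_iff, Set.mem_singleton_iff]
    rw [show y ^ 2 + y = y * (y + 1) by ring, mul_eq_zero, CharTwo.add_eq_zero]
  have h2 : Nat.card (artinSchreier K).ker = 2 := by
    change Nat.card ((artinSchreier K).ker : Set K) = 2
    rw [hker, Nat.card_coe_set_eq, Set.ncard_pair zero_ne_one]
  have h1 := (artinSchreier K).range.card_mul_index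
  have h3 := (artinSchreier K).ker.card_mul_index
  rw [AddSubgroup.index_ker, h2] at h3
  have hpos : 0 < Nat.card (artinSchreier K).range := Nat.card_pos
  rw [← h3, mul_comm 2] at h1
  exact Nat.eq_of_mul_eq_mul_left hpos h1

/-- The additive character with kernel `{y² + y}`, with values `±1`. -/
noncomputable def asChar (K : Type*) [Field K] [Finite K] [CharP K 2] : AddChar K ℤ where
  toFun x := if x ∈ (artinSchreier K).range then 1 else -1
  map_zero_eq_one' := by rw [if_pos (zero_mem _)]
  map_add_eq_mul' x y := by
    rw [AddSubgroup.add_mem_iff_of_index_two artinSchreier_range_index]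
    by_cases hx : x ∈ (artinSchreier K).range <;> by_cases hy : y ∈ (artinSchreier K).range <;>
      simp [hx, hy]

lemma asChar_apply (x : K) :
    asChar K x = if x ∈ (artinSchreier K).range then 1 else -1 := rfl

lemma asChar_sum {ι : Type*} [Fintype ι] (f : ι → K) :
    asChar K (∑ j, f j) = ∏ j, asChar K (f j) :=
  map_prod (asChar K).toMonoidHom (fun j => Multiplicative.ofAdd (f j)) Finset.univ

lemma abs_asChar (x : K) : |asChar K x| = 1 := by
  rw [asChar_apply]; split_ifs <;> simp

lemma asChar_ne_one : asChar K ≠ 1 := by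
  intro h
  have htop : (artinSchreier K).range = ⊤ := by
    rw [eq_top_iff]
    intro x _
    by_contra hx
    have := DFunLike.congr_fun h x
    rw [asChar_apply, if_neg hx] at this
    norm_num at this
  have := artinSchreier_range_index (K := K)
  rw [htop, AddSubgroup.index_top] at this
  omega

lemma polyMoebius_square (t : K) : polyMoebius (X ^ 2 + C 0 * X + C t) = 0 := by
  obtain ⟨w, rfl⟩ := FiniteField.isSquare_of_char_two (CharP.ringChar_of_prime_eq_zero
    Nat.prime_two (by exact_mod_cast CharP.cast_eq_zero K 2)) t
  rw [polyMoebius, if_neg]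
  intro h
  have h1 := h (X + C w) ⟨1, by
    have := CharTwo.add_sq (X : K[X]) (C w)
    rw [C_mul, C_0]; linear_combination -this⟩
  exact (irreducible_X_add_C w).not_isUnit h1

/-- For `s ≠ 0`, the roots of `X² + sX + t` are the `s * y` with `y² + y = t / s²`. -/
lemma polyMoebius_quadratic {s : K} (hs : s ≠ 0) (t : K) :
    polyMoebius (X ^ 2 + C s * X + C t) = asChar K (t / s ^ 2) := by
  rw [asChar_apply]
  split_ifs with h
  · obtain ⟨y, hy⟩ := h
    change y ^ 2 + y = t / s ^ 2 at hy
    have ht : t = (s * y) * (s * y + s) := by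
      field_simp at hy
      linear_combination -hy
    have hF : (X + C (s * y)) * (X + C (s * y + s)) = X ^ 2 + C s * X + C t := by
      have h2 : C (s * y) + C (s * y) = (0 : K[X]) := CharTwo.add_self_eq_zero _
      rw [ht, C_mul (a := s * y), C_add]
      linear_combination X * h2
    have hcop : IsCoprime (X + C (s * y)) (X + C (s * y + s)) := by
      refine ⟨-C s⁻¹, C s⁻¹, ?_⟩
      have : C s⁻¹ * C s = (1 : K[X]) := by rw [← C_mul, inv_mul_cancel₀ hs, C_1]
      rw [C_add]
      linear_combination this
    rw [polyMoebius_of_factorization (m := {X + C (s * y), X + C (s * y + s)})]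
    · simp
    · rw [← hF, squarefree_mul_iff]
      exact ⟨hcop.isRelPrime, (irreducible_X_add_C _).squarefree,
        (irreducible_X_add_C _).squarefree⟩
    · intro p hp
      simp only [Multiset.insert_eq_cons, Multiset.mem_cons, Multiset.mem_singleton] at hp
      rcases hp with rfl | rfl <;> exact irreducible_X_add_C _
    · simpa using hF
  · have hdeg : (X ^ 2 + C s * X + C t : K[X]).natDegree = 2 := by compute_degree!
    have hirr : Irreducible (X ^ 2 + C s * X + C t) := by
      refine irreducible_of_degree_le_three_of_not_isRoot (by rw [hdeg]; decide) fun z hz => h ?_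
      refine ⟨z / s, ?_⟩
      change (z / s) ^ 2 + z / s = t / s ^ 2
      simp only [IsRoot, eval_add, eval_pow, eval_mul, eval_X, eval_C] at hz
      have := CharTwo.add_eq_zero.mp hz
      field_simp
      linear_combination this
    rw [polyMoebius_of_factorization hirr.squarefree {X ^ 2 + C s * X + C t}]
    · simp
    · simpa using hirr
    · simp

end Moebius

/-- In characteristic two, a sum `∑_j ε_j / (u + a_j)` in which some fixed pole occurs an odd number
of times vanishes, away from its poles, at fewer points than it has terms. -/
lemma card_bad_lt {K ι : Type*} [Field K] [Fintype K] [CharP K 2] [Fintype ι]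
    (a : ι → K) (ε : ι → ℕ)
    (h : ∃ j, Odd (∑ i ∈ Finset.univ.filter (fun i => a i = a j), ε i)) :
    (Finset.univ.filter (fun u : K => (∀ j, u + a j ≠ 0) ∧ ∑ j, (ε j : K) / (u + a j) = 0)).card
      < Fintype.card ι := by
  obtain ⟨j₀, hj₀⟩ := h
  set A : Finset K := Finset.univ.image a with hA
  have ha (j : ι) : a j ∈ A := Finset.mem_image_of_mem _ (Finset.mem_univ j)
  have hAcard : A.card ≤ Fintype.card ι := Finset.card_image_le
  have hApos : 0 < A.card := Finset.card_pos.mpr ⟨_, ha j₀⟩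
  set P : K[X] := ∑ j, C (ε j : K) * ∏ c ∈ A.erase (a j), (X + C c) with hP
  have heval (u : K) : P.eval u = ∑ j, (ε j : K) * ∏ c ∈ A.erase (a j), (u + c) := by
    simp [hP, eval_finsetSum, eval_prod]
  have hne : P ≠ 0 := by
    intro h0
    have h1 := heval (a j₀)
    have hodd : ((∑ i ∈ Finset.univ.filter (fun i => a i = a j₀), ε i : ℕ) : K) = 1 := by
      obtain ⟨k, hk⟩ := hj₀
      rw [hk]
      push_cast
      rw [CharTwo.two_eq_zero]; ring
    have h2 : ∑ j, (ε j : K) * ∏ c ∈ A.erase (a j), (a j₀ + c)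
        = ((∑ i ∈ Finset.univ.filter (fun i => a i = a j₀), ε i : ℕ) : K)
          * ∏ c ∈ A.erase (a j₀), (a j₀ + c) := by
      push_cast
      rw [Finset.sum_mul, Finset.sum_filter]
      refine Finset.sum_congr rfl fun j _ => ?_
      split_ifs with hj
      · rw [hj]
      · rw [Finset.prod_eq_zero (Finset.mem_erase.mpr ⟨fun e => hj e.symm, ha j₀⟩)
          (CharTwo.add_self_eq_zero _), mul_zero]
    rw [h2, hodd, h0, eval_zero, one_mul] at h1
    refine Finset.prod_ne_zero_iff.mpr (fun c hc h0 => ?_) h1.symm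
    exact (Finset.mem_erase.mp hc).1 (CharTwo.add_eq_zero.mp h0).symm
  have hdeg : P.natDegree ≤ A.card - 1 := by
    refine natDegree_sum_le_of_forall_le _ _ fun j _ => ?_
    refine (natDegree_C_mul_le _ _).trans ?_
    rw [natDegree_prod_of_monic _ _ fun c _ => monic_X_add_C c]
    simp [Finset.card_erase_of_mem (ha j)]
  have hsub : Finset.univ.filter
      (fun u : K => (∀ j, u + a j ≠ 0) ∧ ∑ j, (ε j : K) / (u + a j) = 0) ⊆ P.roots.toFinset := by
    intro u hu
    obtain ⟨hu, hsum⟩ := (Finset.mem_filter.mp hu).2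
    rw [Multiset.mem_toFinset, mem_roots hne, IsRoot, heval]
    have : ∑ j, (ε j : K) * ∏ c ∈ A.erase (a j), (u + c)
        = (∑ j, (ε j : K) / (u + a j)) * ∏ c ∈ A, (u + c) := by
      rw [Finset.sum_mul]
      refine Finset.sum_congr rfl fun j _ => ?_
      rw [← Finset.mul_prod_erase _ _ (ha j)]
      have := hu j
      field_simp
    rw [this, hsum, zero_mul]
  have h3 := Finset.card_le_card hsub
  have h4 := P.roots.toFinset_card_le
  have h5 := P.card_roots'
  omega

/-- For a fixed `u`, the sum over `v` is at most `#K` in absolute value, and it is zero unless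
`∑ ε_j / (u + a_j) = 0` with no vanishing denominator. -/
lemma inner_sum_bound {K ι : Type*} [Field K] [Fintype K] [CharP K 2] [Fintype ι]
    (a b : ι → K) (ε : ι → ℕ) (hε : ∀ j, ε j = 1 ∨ ε j = 2) (u : K) :
    |∑ v : K, ∏ j, polyMoebius (X ^ 2 + C (u + a j) * X + C (v + b j)) ^ ε j|
      ≤ if (∀ j, u + a j ≠ 0) ∧ ∑ j, (ε j : K) / (u + a j) = 0
        then (Fintype.card K : ℤ) else 0 := by
  by_cases hu : ∀ j, u + a j ≠ 0
  swap
  · rw [if_neg (fun h => hu h.1)]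
    push Not at hu
    obtain ⟨j, hj⟩ := hu
    rw [Finset.sum_eq_zero, abs_zero]
    intro v _
    refine Finset.prod_eq_zero (Finset.mem_univ j) ?_
    rw [hj, polyMoebius_square, zero_pow]
    rcases hε j with h | h <;> omega
  set S : K := ∑ j, (ε j : K) / (u + a j) with hS
  set T : K := ∑ j, (ε j : K) * b j / (u + a j) ^ 2 with hT
  -- `ε_j² = ε_j` in `𝔽₂`, and squaring is additive
  have hsq : S ^ 2 = ∑ j, (ε j : K) / (u + a j) ^ 2 := by
    rw [hS, CharTwo.sum_sq]
    refine Finset.sum_congr rfl fun j _ => ?_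
    rcases hε j with h | h <;> simp [h, CharTwo.two_eq_zero]
  have hterm (v : K) : ∏ j, polyMoebius (X ^ 2 + C (u + a j) * X + C (v + b j)) ^ ε j
      = asChar K (v * S ^ 2) * asChar K T := by
    rw [← AddChar.map_add_eq_mul, hsq, hT, Finset.mul_sum, ← Finset.sum_add_distrib,
      asChar_sum]
    refine Finset.prod_congr rfl fun j _ => ?_
    rw [polyMoebius_quadratic (hu j), ← AddChar.map_nsmul_eq_pow, nsmul_eq_mul]
    congr 1
    ring
  simp_rw [hterm]
  split_ifs with h
  · refine (Finset.abs_sum_le_sum_abs _ _).trans ?_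
    simp [abs_mul, abs_asChar]
  · have hS0 : S ^ 2 ≠ 0 := pow_ne_zero 2 fun h0 => h ⟨hu, h0⟩
    have h1 : ∑ v, asChar K (v * S ^ 2) = ∑ v, asChar K v :=
      Equiv.sum_comp (Equiv.mulRight₀ _ hS0) (fun x => asChar K x)
    rw [← Finset.sum_mul, h1, AddChar.sum_eq_zero_of_ne_one asChar_ne_one]
    simp

theorem quadratic_case_Agamma_nonempty
    (Fq : Type*) [Field Fq] [Fintype Fq] (q : ℕ) (hq : q = Fintype.card Fq)
    (hq2 : Even q)
    (r : ℕ) (a b : Fin r → Fq)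
    (α : Fin r → Polynomial Fq) (hα : ∀ j, α j = C (a j) * X + C (b j))
    (hαdist : Function.Injective α)
    (ε : Fin r → ℕ) (hε : ∀ j, ε j = 1 ∨ ε j = 2)
    -- `A_γ ≠ ∅` : some value in `A` has `∑_{i : a_i = a} ε_i` odd
    (hAγ : ∃ j : Fin r, Odd (∑ i ∈ Finset.univ.filter (fun i => a i = a j), ε i)) :
    |Csum 2 r α ε| < r * q := by
  subst hq
  have hchar : ringChar Fq = 2 :=
    FiniteField.even_card_iff_char_two.mpr (Nat.even_iff.mp hq2)
  have : CharP Fq 2 := hchar ▸ ringChar.charP Fq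
  have hC : Csum 2 r α ε = ∑ u : Fq, ∑ v : Fq, ∏ j,
      polyMoebius (X ^ 2 + C (u + a j) * X + C (v + b j)) ^ ε j := by
    rw [Csum, Finset.sum_comm, ← Fintype.sum_prod_type',
      ← Equiv.sum_comp (finTwoArrowEquiv Fq).symm]
    refine Finset.sum_congr rfl fun p _ => Finset.prod_congr rfl fun j _ => ?_
    congr 2
    simp [hα, Fin.sum_univ_two]
    ring
  rw [hC]
  calc _ ≤ ∑ u : Fq, |∑ v : Fq, ∏ j,
      polyMoebius (X ^ 2 + C (u + a j) * X + C (v + b j)) ^ ε j| :=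
        Finset.abs_sum_le_sum_abs _ _
    _ ≤ _ := Finset.sum_le_sum fun u _ => inner_sum_bound a b ε hε u
    _ = ((Finset.univ.filter (fun u : Fq => (∀ j, u + a j ≠ 0) ∧
          ∑ j, (ε j : Fq) / (u + a j) = 0)).card : ℤ) * Fintype.card Fq := by
        rw [Finset.card_filter, Nat.cast_sum, Finset.sum_mul]
        refine Finset.sum_congr rfl fun u _ => ?_
        split_ifs <;> simp
    _ < r * Fintype.card Fq := by
        have := card_bad_lt a ε hAγ
        rw [Fintype.card_fin] at this
        exact mul_lt_mul_of_pos_right (by exact_mod_cast this) (by exact_mod_cast Fintype.card_pos)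
end

section
/- Let q be an even prime power and let F ∈ 𝔽_q[x] be a nonzero squarefree polynomial. Then μ(F) = (−1)^{deg F} · χ₂(Berl(F)). -/
/-!
The roots of `F` in its splitting field are permuted by the `q`-power map. This permutation `σ` has
one cycle for each irreducible factor of `F`, of length the degree of that factor, so
`sign σ = (-1) ^ deg F * μ(F)` (`exists_root_enum`).

On the other hand the element `β = Σ_{i<j} r_i / (r_i + r_j)` satisfies `β² + β = Berl(F)`. Since
`r_i / (r_i + r_j) + r_j / (r_i + r_j) = 1`, applying the `q`-power map to `β` adds the number of
inversions of `σ` modulo 2 (`sum_comp_perm`). Hence `Berl(F)` is fixed by Frobenius and so lies in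
`𝔽_q`, and the equation `y² + y = Berl(F)`, whose solutions are `β` and `β + 1`, is solvable in `𝔽_q`
exactly when `σ` is even: `χ₂(Berl(F)) = sign σ` (`exists_berl`).
-/

open Polynomial
open scoped Classical

/-- The quadratic character in characteristic 2: `χ₂(x) = 1` if `x = y² + y` for some `y`,
and `χ₂(x) = -1` otherwise. -/
noncomputable def chiTwo {Fq : Type*} [Field Fq] (x : Fq) : ℤ :=
  if ∃ y : Fq, y ^ 2 + y = x then 1 else -1

/-- `Σ_{i<j} r_i r_j / (r_i + r_j)²` over a multiset of roots. (In characteristic 2 the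
diagonal terms `r_i r_i / (r_i + r_i)²` vanish, since division by zero is zero.) -/
noncomputable def berlSum {L : Type*} [Field L] (m : Multiset L) : L :=
  (m.sym2.map (Sym2.lift ⟨fun x y => x * y / (x + y) ^ 2,
    fun x y => by show x * y / (x + y) ^ 2 = y * x / (y + x) ^ 2; rw [mul_comm, add_comm]⟩)).sum

/-- Berlekamp's discriminant of `F`, computed from the roots of `F` in its splitting field. -/
noncomputable def berlRoots {K : Type*} [Field K] (F : Polynomial K) : F.SplittingField :=
  berlSum ((F.map (algebraMap K F.SplittingField)).roots)

/-! ### Berlekamp's discriminant and the sign of Frobenius -/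

/-- If `f i j + f j i = 1` in characteristic 2, then relabelling the indices of `Σ_{i<j} f i j` by `σ`
adds one `1` for each inversion of `σ`, hence changes the sum by the parity of `σ`. -/
theorem sum_comp_perm {L : Type*} [CommRing L] [CharP L 2] {n : ℕ} (f : Fin n → Fin n → L)
    (hf : ∀ i j, i ≠ j → f i j + f j i = 1) (σ : Equiv.Perm (Fin n)) :
    (∑ p ∈ (Finset.univ : Finset (Fin n)).offDiag with p.1 < p.2, f (σ p.1) (σ p.2)) =
    (∑ p ∈ (Finset.univ : Finset (Fin n)).offDiag with p.1 < p.2, f p.1 p.2) +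
      if Equiv.Perm.sign σ = 1 then 0 else 1 := by
  set D := (Finset.univ : Finset (Fin n)).offDiag.filter (fun p => p.1 < p.2) with hD
  -- `h` evaluates `f` on an unordered pair in increasing order, so its sum is `σ`-invariant.
  let h : Sym2 (Fin n) → L := Sym2.lift ⟨fun i j => f (min i j) (max i j), fun i j => by
    simp only [min_comm, max_comm]⟩
  have key : ∀ p ∈ D, f (σ p.1) (σ p.2) =
      h (Sym2.map σ s(p.1, p.2)) + if σ p.1 < σ p.2 then 0 else 1 := by
    intro p hp
    have hne : σ p.1 ≠ σ p.2 := fun hh => by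
      have := σ.injective hh
      simp [hD, this] at hp
    rcases lt_or_gt_of_ne hne with hlt | hlt
    · simp [h, hlt, hlt.le]
    · simp only [Sym2.map_mk, h, Sym2.lift_mk, min_eq_right hlt.le, max_eq_left hlt.le, not_lt_of_gt hlt, if_false]
      rw [← hf _ _ hne]
      have : f (σ p.2) (σ p.1) + f (σ p.2) (σ p.1) = 0 := CharTwo.add_self_eq_zero _
      linear_combination -this
  have h1 : ∑ p ∈ D, h (Sym2.map σ s(p.1, p.2)) = ∑ p ∈ D, f p.1 p.2 := by
    rw [hD, ← Finset.sum_sym2_filter_not_isDiag Finset.univ (fun z => h (Sym2.map σ z))]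
    trans ∑ z ∈ (Finset.univ : Finset (Fin n)).sym2 with ¬ z.IsDiag, h z
    · refine Finset.sum_bijective (Sym2.map σ) (Finite.injective_iff_bijective.1 (Sym2.map.injective σ.injective)) ?_ (fun _ _ => rfl)
      intro z
      induction z with | _ a b => simp
    · rw [Finset.sum_sym2_filter_not_isDiag]
      refine Finset.sum_congr rfl fun p hp => ?_
      have : p.1 < p.2 := (Finset.mem_filter.1 hp).2
      simp [h, this.le]
  -- The sign counts inversions.
  have h2 : Equiv.Perm.sign σ = (-1) ^ (D.filter (fun p => ¬ σ p.1 < σ p.2)).card := by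
    rw [σ.sign_eq_prod_prod_Iio, Finset.prod_sigma', ← Finset.prod_const, Finset.prod_filter]
    refine Finset.prod_bij' (fun p _ => (p.2, p.1)) (fun p _ => ⟨p.2, p.1⟩) ?_ ?_ ?_ ?_ ?_
    · intro p hp
      have : p.2 < p.1 := by simpa using hp
      simp [hD, this, this.ne]
    · intro p hp
      simp [hD] at hp ⊢
      exact hp.2
    · simp
    · simp
    · intro p hp
      by_cases hh : σ p.2 < σ p.1
      · simp [hh]
      · simp [hh]
  rw [Finset.sum_congr rfl key, Finset.sum_add_distrib, h1]
  congr 1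
  have h3 : (∑ p ∈ D, if σ p.1 < σ p.2 then (0 : L) else 1) =
      ((D.filter (fun p => ¬ σ p.1 < σ p.2)).card : L) := by
    rw [← Finset.sum_boole]
    exact Finset.sum_congr rfl fun p _ => by split_ifs <;> simp_all
  rw [h3, h2]
  rcases Nat.even_or_odd (D.filter (fun p => ¬ σ p.1 < σ p.2)).card with he | ho
  · rw [if_pos he.neg_one_pow, (CharP.cast_eq_zero_iff L 2 _).2 he.two_dvd]
  · rw [if_neg (by rw [ho.neg_one_pow]; decide)]
    obtain ⟨k, hk⟩ := ho
    rw [hk]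
    push_cast
    rw [CharTwo.two_eq_zero]; ring

theorem berlSum_eq {L : Type*} [Field L] [CharP L 2] {n : ℕ} (r : Fin n → L) :
    berlSum (Finset.univ.val.map r) =
      ∑ p ∈ (Finset.univ : Finset (Fin n)).offDiag with p.1 < p.2,
        r p.1 * r p.2 / (r p.1 + r p.2) ^ 2 := by
  rw [berlSum, Multiset.sym2_map, Multiset.map_map]
  set g : Sym2 L → L := Sym2.lift ⟨fun x y => x * y / (x + y) ^ 2, _⟩ with hg
  have e : (∑ p ∈ (Finset.univ : Finset (Fin n)).offDiag with p.1 < p.2,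
        r p.1 * r p.2 / (r p.1 + r p.2) ^ 2) =
      ∑ p ∈ (Finset.univ : Finset (Fin n)).offDiag with p.1 < p.2, (g ∘ Sym2.map r) s(p.1, p.2) := rfl
  rw [e, ← Finset.sum_sym2_filter_not_isDiag Finset.univ (g ∘ Sym2.map r),
    Finset.sum_filter_of_ne]
  · rfl
  · intro z _ hz hd
    induction z with | _ a b =>
    obtain rfl : a = b := hd
    -- A diagonal term has denominator `(x + x)² = 0`, so it is zero by the convention `x / 0 = 0`.
    apply hz
    simp [hg, CharTwo.add_self_eq_zero]

/-- The core of the argument. With `β = Σ_{i<j} r_i / (r_i + r_j)` one has `β² + β = Berl`, and the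
`q`-power map sends `β` to `β` or `β + 1` according to the sign of the permutation `σ` it induces on
the `r_i`. So Berlekamp's discriminant lies in `K`, and it has the form `y² + y` over `K` exactly
when `σ` is even. -/
theorem exists_berl {K L : Type*} [Field K] [Fintype K] [Field L] [Algebra K L] [CharP L 2]
    (hfix : ∀ x : L, x ^ Fintype.card K = x → ∃ y, algebraMap K L y = x)
    {n : ℕ} (r : Fin n → L) (hr : Function.Injective r) (σ : Equiv.Perm (Fin n))
    (hσ : ∀ i, r i ^ Fintype.card K = r (σ i)) :
    ∃ b : K, algebraMap K L b = berlSum (Finset.univ.val.map r) ∧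
      chiTwo b = Equiv.Perm.sign σ := by
  let φ := FiniteField.frobeniusAlgHom K L
  have hφ : ∀ x, φ x = x ^ Fintype.card K := fun x => rfl
  set β := ∑ p ∈ (Finset.univ : Finset (Fin n)).offDiag with p.1 < p.2,
    r p.1 / (r p.1 + r p.2) with hβ
  have hne : ∀ i j, i ≠ j → r i + r j ≠ 0 := fun i j hij h =>
    hij (hr (CharTwo.add_eq_zero.1 h))
  have hb : β ^ 2 + β = berlSum (Finset.univ.val.map r) := by
    rw [berlSum_eq, hβ, CharTwo.sum_sq, ← Finset.sum_add_distrib]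
    refine Finset.sum_congr rfl fun p hp => ?_
    have := hne p.1 p.2 (Finset.mem_filter.1 hp).2.ne
    field_simp
    linear_combination (r p.1)^2 * CharTwo.two_eq_zero (R := L)
  have hs : β ^ Fintype.card K = β + if Equiv.Perm.sign σ = 1 then 0 else 1 := by
    rw [← sum_comp_perm (fun i j => r i / (r i + r j)) _ σ, ← hφ, hβ, map_sum]
    · refine Finset.sum_congr rfl fun p _ => ?_
      rw [map_div₀, map_add, hφ, hφ, hσ, hσ]
    · intro i j hij
      rw [add_comm (r j) (r i), ← add_div, div_self (hne i j hij)]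
  obtain ⟨b, hb'⟩ := hfix (β ^ 2 + β) (by
    rw [← hφ, map_add, map_pow, hφ, hs]
    split_ifs
    · simp
    · linear_combination (β + 1) * CharTwo.two_eq_zero (R := L))
  refine ⟨b, hb'.trans hb, ?_⟩
  rw [chiTwo]
  rcases Int.units_eq_one_or (Equiv.Perm.sign σ) with h | h
  · rw [h] at hs ⊢
    obtain ⟨y, hy⟩ := hfix β (by simpa using hs)
    rw [if_pos ⟨y, (algebraMap K L).injective (by rw [hb', map_add, map_pow, hy])⟩]
    simp
  · rw [if_neg]
    · simp [h]
    rintro ⟨y, hy⟩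
    rw [h, if_neg (by decide)] at hs
    -- The solutions of `t² + t = β² + β` are `β` and `β + 1`, so `y` forces `β` into `K`.
    have h0 : (algebraMap K L y + β) * (algebraMap K L y + β + 1) = 0 := by
      rw [← hy, map_add, map_pow] at hb'
      linear_combination hb' + (algebraMap K L y * β + β ^ 2 + β) * CharTwo.two_eq_zero (R := L)
    have : β ^ Fintype.card K = β := by
      rcases mul_eq_zero.1 h0 with h0 | h0
      · rw [← CharTwo.add_eq_zero.1 h0, ← map_pow, FiniteField.pow_card]
      · rw [add_assoc] at h0
        have : β = algebraMap K L (y + 1) := by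
          rw [map_add, CharTwo.add_eq_zero.1 h0, map_one, add_assoc, CharTwo.add_self_eq_zero, add_zero]
        rw [this, ← map_pow, FiniteField.pow_card]
    rw [this] at hs
    simp at hs

/-! ### Frobenius orbits and fixed elements -/

/-- A root of an irreducible `P` of degree `d` has exact period `d` under the `q`-power map, because the
Frobenius of `K[X]/(P)` has order `d`. -/
theorem pow_card_pow_eq_self_iff {K L : Type*} [Field K] [Fintype K] [Field L] [Algebra K L]
    {P : K[X]} (hP : Irreducible P) {a : L} (ha : aeval a P = 0) (k : ℕ) :
    a ^ Fintype.card K ^ k = a ↔ P.natDegree ∣ k := by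
  have := Fact.mk hP
  let pb := AdjoinRoot.powerBasis hP.ne_zero
  have : Module.Finite K (AdjoinRoot P) := pb.finite
  have : Finite (AdjoinRoot P) := Module.finite_of_finite K
  have hrk : Module.finrank K (AdjoinRoot P) = P.natDegree := by
    rw [pb.finrank, AdjoinRoot.powerBasis_dim]
  rw [← hrk, ← FiniteField.orderOf_frobeniusAlgHom, orderOf_dvd_iff_pow_eq_one]
  let f : AdjoinRoot P →ₐ[K] L := AdjoinRoot.liftAlgHom P (Algebra.ofId K L) a ha
  have hfa : f (AdjoinRoot.root P) = a := AdjoinRoot.liftAlgHom_root ..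
  have hpow : ∀ x : AdjoinRoot P, (FiniteField.frobeniusAlgHom K (AdjoinRoot P) ^ k) x
      = x ^ Fintype.card K ^ k := by
    intro x
    rw [AlgHom.coe_pow, FiniteField.coe_frobeniusAlgHom, pow_iterate]
  constructor
  · intro h
    apply AdjoinRoot.algHom_ext
    apply f.toRingHom.injective
    change f _ = f _
    rw [hpow, map_pow, hfa, h, AlgHom.one_apply, hfa]
  · intro h
    rw [← hfa, ← map_pow, ← hpow, h, AlgHom.one_apply]

/-- The elements fixed by the `q`-power map are those of `K`, since `X ^ q - X = ∏ (X - a)` over `K`. -/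
theorem exists_algebraMap_of_pow_card_eq {K L : Type*} [Field K] [Fintype K] [Field L] [Algebra K L]
    (x : L) (hx : x ^ Fintype.card K = x) : ∃ y, algebraMap K L y = x := by
  have hP : (X ^ Fintype.card K - X : K[X]) =
      ((X ^ Fintype.card K - X : K[X]).roots.map (fun a => X - C a)).prod := by
    have hd := FiniteField.X_pow_card_sub_X_natDegree_eq K (p := Fintype.card K) Fintype.one_lt_card
    refine (prod_multiset_X_sub_C_of_monic_of_roots_card_eq ?_ ?_).symm
    · exact monic_X_pow_sub (by rw [degree_X]; exact_mod_cast Fintype.one_lt_card)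
    · rw [FiniteField.roots_X_pow_card_sub_X, hd]; rfl
  rw [FiniteField.roots_X_pow_card_sub_X] at hP
  have h0 := congrArg (aeval x) hP
  change _ = aeval x (∏ a, (X - C a)) at h0
  rw [map_prod, map_sub, map_pow, aeval_X, hx, sub_self, eq_comm, Finset.prod_eq_zero_iff] at h0
  obtain ⟨a, -, ha⟩ := h0
  exact ⟨a, (sub_eq_zero.1 (by simpa using ha)).symm⟩

/-! ### The sign of Frobenius on the roots of a polynomial -/

/-- The sign of a permutation acting fibrewise is the product of the signs on the fibres. -/
theorem sign_sigmaCongrRight' {α : Type*} {β : α → Type*} [Fintype α] [∀ a, Fintype (β a)]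
    (σ : ∀ a, Equiv.Perm (β a)) :
    Equiv.Perm.sign (Equiv.Perm.sigmaCongrRight σ) = ∏ a, Equiv.Perm.sign (σ a) := by
  have single : ∀ a, Equiv.Perm.sign (Equiv.Perm.sigmaCongrRight (Pi.mulSingle a (σ a))) =
      Equiv.Perm.sign (σ a) := by
    intro a
    refine (Equiv.Perm.sign_bij (fun i _ => ⟨a, i⟩) ?_ ?_ ?_).symm
    · intro i _ _
      simp
    · intro i j _ _ hij
      simpa using hij
    · rintro ⟨b, i⟩ hb
      by_cases hab : b = a
      · subst hab
        exact ⟨i, by simpa using hb, rfl⟩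
      · simp [Pi.mulSingle_eq_of_ne hab] at hb
  have key : ∀ S : Finset α,
      Equiv.Perm.sign (Equiv.Perm.sigmaCongrRight (fun a => if a ∈ S then σ a else 1)) =
        ∏ a ∈ S, Equiv.Perm.sign (σ a) := by
    intro S
    induction S using Finset.induction_on with
    | empty =>
      simp only [Finset.notMem_empty, if_false, Finset.prod_empty]
      exact (congrArg Equiv.Perm.sign Equiv.Perm.sigmaCongrRight_one).trans Equiv.Perm.sign_one
    | insert a S ha ih =>
      rw [Finset.prod_insert ha, ← ih, ← single a, ← Equiv.Perm.sign_mul,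
        Equiv.Perm.sigmaCongrRight_mul]
      congr 2
      funext b
      by_cases hb : b = a
      · subst hb
        simp [ha]
      · simp [hb]
  simpa using key Finset.univ

/-- The roots of a squarefree split `F` are distinct and can be numbered so that the `q`-power map becomes
a permutation `σ` of the indices, a cycle of length `deg P` on the roots of each monic irreducible
factor `P`; therefore `sign σ = ∏ (-1) ^ (deg P - 1) = (-1) ^ (deg F - s)` for `s` factors. -/
theorem exists_root_enum {K L : Type*} [Field K] [Fintype K] [Field L] [Algebra K L]
    {F : K[X]} (hF : F ≠ 0) (hsf : Squarefree F) (hs : (F.map (algebraMap K L)).Splits) :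
    ∃ (r : Fin F.natDegree → L) (σ : Equiv.Perm (Fin F.natDegree)),
      Function.Injective r ∧ (F.map (algebraMap K L)).roots = Finset.univ.val.map r ∧
      (∀ i, r i ^ Fintype.card K = r (σ i)) ∧
      (Equiv.Perm.sign σ : ℤ) = (-1) ^ F.natDegree *
        (-1) ^ Multiset.card (UniqueFactorizationMonoid.factors F) := by
  set N := UniqueFactorizationMonoid.normalizedFactors F with hN
  have hmem : ∀ P, P ∈ N ↔ Irreducible P ∧ P.Monic ∧ P ∣ F := fun P =>
    Polynomial.mem_normalizedFactors_iff hF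
  have hnd : N.Nodup :=
    (UniqueFactorizationMonoid.squarefree_iff_nodup_normalizedFactors hF).1 hsf
  have hcard : Multiset.card (UniqueFactorizationMonoid.factors F) = N.toFinset.card := by
    rw [Multiset.toFinset_card_of_nodup hnd, hN, UniqueFactorizationMonoid.normalizedFactors,
      Multiset.card_map]
  have hFm : F.map (algebraMap K L) ≠ 0 := Polynomial.map_ne_zero hF
  have hroot : ∀ P : N.toFinset, ∃ a : L, aeval a P.1 = 0 := by
    rintro ⟨P, hP⟩
    obtain ⟨hi, -, hd⟩ := (hmem P).1 (Multiset.mem_toFinset.1 hP)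
    have hPs : (P.map (algebraMap K L)).Splits :=
      hs.of_dvd hFm (Polynomial.map_dvd _ hd)
    obtain ⟨a, ha⟩ := hPs.exists_eval_eq_zero (by
      rw [degree_map]; exact hi.degree_pos.ne')
    exact ⟨a, by rwa [aeval_def, ← eval_map]⟩
  choose a ha using hroot
  have hirr : ∀ P : N.toFinset, Irreducible P.1 := fun P =>
    ((hmem P).1 (Multiset.mem_toFinset.1 P.2)).1
  have hmon : ∀ P : N.toFinset, P.1.Monic := fun P =>
    ((hmem P).1 (Multiset.mem_toFinset.1 P.2)).2.1
  have hdvd : ∀ P : N.toFinset, P.1 ∣ F := fun P =>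
    ((hmem P).1 (Multiset.mem_toFinset.1 P.2)).2.2
  set q := Fintype.card K with hq
  have haq : ∀ (P : N.toFinset) (k : ℕ), aeval (a P ^ q ^ k) P.1 = 0 := by
    intro P k
    have : (FiniteField.frobeniusAlgHom K L ^ k) (a P) = a P ^ q ^ k := by
      rw [AlgHom.coe_pow, FiniteField.coe_frobeniusAlgHom, pow_iterate]
    rw [← this, aeval_algHom_apply, ha, map_zero]
  -- The index `(P, i)` stands for the root `a P ^ q ^ i`, where `a P` is a chosen root of `P`.
  let ι := Σ P : N.toFinset, Fin P.1.natDegree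
  let r₀ : ι → L := fun x => a x.1 ^ q ^ (x.2 : ℕ)
  have hr₀ : Function.Injective r₀ := by
    rintro ⟨P, i⟩ ⟨Q, j⟩ h
    change a P ^ q ^ (i : ℕ) = a Q ^ q ^ (j : ℕ) at h
    have hPQ : P = Q := Subtype.ext <| by
      rw [minpoly.eq_of_irreducible_of_monic (hirr P) (haq P i) (hmon P),
        minpoly.eq_of_irreducible_of_monic (hirr Q) (haq Q j) (hmon Q), h]
    subst hPQ
    -- Raising to the power `q ^ (d - i)` turns `h` into a period `d - i + j` of `a P`.
    have h' := congrArg (fun x => x ^ q ^ (P.1.natDegree - i)) h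
    simp only [← pow_mul, ← pow_add] at h'
    rw [Nat.add_sub_cancel' i.2.le,
      (pow_card_pow_eq_self_iff (hirr P) (ha P) _).2 dvd_rfl] at h'
    obtain ⟨k, hk⟩ := (pow_card_pow_eq_self_iff (hirr P) (ha P) _).1 h'.symm
    have hi := i.2
    have hj := j.2
    have hk1 : k = 1 := by
      have h1 : 0 < k := by
        rcases Nat.eq_zero_or_pos k with rfl | h
        · rw [mul_zero] at hk
          omega
        · exact h
      have h2 : k < 2 := by
        by_contra hc
        have := Nat.mul_le_mul_left P.1.natDegree (not_lt.1 hc)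
        omega
      omega
    subst hk1
    have : i = j := Fin.ext (by omega)
    rw [this]
  have hdeg : (∑ P : N.toFinset, P.1.natDegree) = F.natDegree := by
    rw [Finset.sum_coe_sort N.toFinset (fun P => P.natDegree), Finset.sum,
      Multiset.toFinset_val, hnd.dedup,
      ← natDegree_multiset_prod_of_monic N (fun P hP => ((hmem P).1 hP).2.1)]
    exact natDegree_eq_of_degree_eq
      (degree_eq_degree_of_associated (UniqueFactorizationMonoid.prod_normalizedFactors hF))
  have hι : Fintype.card ι = F.natDegree := by
    rw [Fintype.card_sigma, ← hdeg]
    simp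
  let e : ι ≃ Fin F.natDegree := Fintype.equivFinOfCardEq hι
  let σ₀ : Equiv.Perm ι := Equiv.Perm.sigmaCongrRight fun P => finRotate P.1.natDegree
  have hinj : Function.Injective (r₀ ∘ e.symm) := hr₀.comp e.symm.injective
  refine ⟨r₀ ∘ e.symm, e.permCongr σ₀, hinj, ?_, ?_, ?_⟩
  · symm
    apply Multiset.eq_of_le_of_card_le
    · rw [Multiset.le_iff_subset (Finset.univ.nodup.map hinj)]
      intro x hx
      obtain ⟨i, -, rfl⟩ := Multiset.mem_map.1 hx
      rw [mem_roots hFm, IsRoot.def, eval_map, ← aeval_def]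
      exact aeval_eq_zero_of_dvd_aeval_eq_zero (hdvd _) (haq (e.symm i).1 _)
    · refine (card_roots' _).trans ?_
      simp
  · intro i
    obtain ⟨⟨P, j⟩, rfl⟩ := e.surjective i
    simp only [Function.comp, Equiv.permCongr_apply, Equiv.symm_apply_apply]
    change (a P ^ q ^ (j : ℕ)) ^ q = a P ^ q ^ ((finRotate P.1.natDegree j : Fin _) : ℕ)
    rw [← pow_mul, ← pow_succ]
    have hd := (pow_card_pow_eq_self_iff (hirr P) (ha P) _).2 dvd_rfl
    generalize P.1.natDegree = d at j hd
    cases d with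
    | zero => exact j.elim0
    | succ d =>
      rw [coe_finRotate]
      split_ifs with hj
      · subst hj
        rw [Fin.val_last, hd, pow_zero, pow_one]
      · rfl
  · have hsg : Equiv.Perm.sign σ₀ = ∏ P : N.toFinset, Equiv.Perm.sign (finRotate P.1.natDegree) := by
      convert sign_sigmaCongrRight' (fun P : N.toFinset => finRotate P.1.natDegree)
    rw [Equiv.Perm.sign_permCongr, hsg, hcard, ← hdeg,
      ← Finset.prod_pow_eq_pow_sum, ← Fintype.card_coe, ← Finset.card_univ, ← Finset.prod_const,
      ← Finset.prod_mul_distrib]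
    push_cast
    refine Finset.prod_congr rfl fun P _ => ?_
    rw [sign_finRotate]
    obtain ⟨d, hd⟩ := Nat.exists_eq_succ_of_ne_zero (hirr P).natDegree_pos.ne'
    rw [hd]
    simp [pow_succ]

theorem pellet_char_two
    (Fq : Type*) [Field Fq] [Fintype Fq] (hq2 : Even (Fintype.card Fq))
    (F : Polynomial Fq) (hF : F ≠ 0) (hsf : Squarefree F) :
    ∃ b : Fq, algebraMap Fq F.SplittingField b = berlRoots F ∧
      polyMoebius F = (-1) ^ F.natDegree * chiTwo b := by
  have h2 : ringChar Fq = 2 := FiniteField.even_card_iff_char_two.2 (Nat.even_iff.1 hq2)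
  have : CharP Fq 2 := ringChar.of_eq h2
  have : CharP F.SplittingField 2 := charP_of_injective_algebraMap
    (algebraMap Fq F.SplittingField).injective 2
  obtain ⟨r, σ, hr, hroots, hσ, hsign⟩ :=
    exists_root_enum hF hsf (SplittingField.splits F)
  obtain ⟨b, hb, hchi⟩ := exists_berl exists_algebraMap_of_pow_card_eq r hr σ hσ
  refine ⟨b, by rw [hb, berlRoots, hroots], ?_⟩
  rw [polyMoebius, if_pos hsf, hchi, hsign, ← mul_assoc, ← pow_add, ← two_mul,
    pow_mul, neg_one_sq, one_pow, one_mul]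
end

section
/- Let K be a field of characteristic 2 and let F ∈ K[x] be a separable polynomial of degree n ≥ 1 with roots r₁, …, r_n in a splitting field L of F over K. Then the element Σ_{1≤i<j≤n} r_i r_j / (r_i + r_j)² of L lies in K. -/
/-!
The extension `L / K` is Galois, being the splitting field of a separable polynomial, so an element
of `L` lies in `K` as soon as every `σ ∈ Gal(L/K)` fixes it. Such a `σ` permutes the roots, which
are distinct by separability, and the summand `r i * r j / (r i + r j) ^ 2` is symmetric in `i, j`,
so `σ` merely permutes the terms of the sum, which is indexed by unordered pairs of distinct
indices (`sum_Ioi_perm`).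
-/

open Polynomial

/-- The sum of a symmetric function over the pairs `i < j` is invariant under permutations of the
indices. A permutation need not preserve the order, so the sum is rewritten over unordered pairs. -/
theorem sum_Ioi_perm {n : ℕ} {M : Type*} [AddCommMonoid M] (f : Fin n → Fin n → M)
    (hf : ∀ i j, f i j = f j i) (π : Equiv.Perm (Fin n)) :
    ∑ i : Fin n, ∑ j ∈ Finset.Ioi i, f (π i) (π j) = ∑ i : Fin n, ∑ j ∈ Finset.Ioi i, f i j := by
  have key : ∀ p : Sym2 (Fin n) → M, ∑ i : Fin n, ∑ j ∈ Finset.Ioi i, p s(i, j) =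
      ∑ z : Sym2 (Fin n) with ¬ z.IsDiag, p z := by
    intro p
    rw [← Finset.sym2_univ, Finset.sum_sym2_filter_not_isDiag, Finset.sum_sigma']
    refine Finset.sum_bij' (fun x _ ↦ (x.1, x.2)) (fun x _ ↦ ⟨x.1, x.2⟩) ?_ ?_ ?_ ?_ ?_
    · rintro ⟨i, j⟩ h
      simp only [Finset.mem_sigma, Finset.mem_univ, Finset.mem_Ioi, true_and] at h
      simp [h, h.ne]
    all_goals simp
  let p : Sym2 (Fin n) → M := Sym2.lift ⟨f, hf⟩
  have h₁ := key p
  have h₂ := key (fun z ↦ p (z.map π))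
  simp only [Sym2.map_mk, p, Sym2.lift_mk] at h₁ h₂
  rw [h₁, h₂]
  refine Finset.sum_bij' (fun z _ ↦ z.map π) (fun z _ ↦ z.map π.symm) ?_ ?_ ?_ ?_ ?_
  · intro z
    induction z with | _ i j => simp
  · intro z
    induction z with | _ i j => simp
  · intro z _
    induction z with | _ i j => simp
  · intro z _
    induction z with | _ i j => simp
  · intro z _
    rfl

theorem berlekamp_discriminant_mem_base_field
    (K : Type*) [Field K] [CharP K 2]
    (L : Type*) [Field L] [Algebra K L]
    (n : ℕ) (hn : 1 ≤ n)
    (F : Polynomial K) (hsep : F.Separable) (hdeg : F.natDegree = n)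
    [Polynomial.IsSplittingField K L F]
    (r : Fin n → L)
    (hroots : F.map (algebraMap K L) = C (algebraMap K L F.leadingCoeff) *
      ∏ i : Fin n, (X - C (r i))) :
    (∑ i : Fin n, ∑ j ∈ Finset.Ioi i, r i * r j / (r i + r j) ^ 2) ∈
      (algebraMap K L).range := by
  have : IsGalois K L := IsGalois.of_separable_splitting_field (p := F) hsep
  have : FiniteDimensional K L := IsSplittingField.finiteDimensional L F
  have hinj : Function.Injective r := by
    rw [← separable_prod_X_sub_C_iff]
    have h := hsep.map (f := algebraMap K L)
    rw [hroots] at h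
    exact h.of_mul_right
  have hlc : algebraMap K L F.leadingCoeff ≠ 0 := by simpa using hsep.ne_zero
  have hroot : ∀ x : L, aeval x F = 0 ↔ ∃ i, r i = x := by
    intro x
    rw [aeval_def, ← eval_map, hroots]
    simp only [eval_mul, eval_C, mul_eq_zero, hlc, false_or, eval_prod, Finset.prod_eq_zero_iff,
      Finset.mem_univ, true_and, eval_sub, eval_X, sub_eq_zero]
    exact exists_congr fun _ ↦ eq_comm
  refine (IsGalois.mem_range_algebraMap_iff_fixed _).mpr fun σ ↦ ?_
  have hσ : ∀ i, ∃ j, r j = σ (r i) := by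
    intro i
    rw [← hroot, aeval_algHom_apply, (hroot _).mpr ⟨i, rfl⟩, map_zero]
  choose π hπ using hσ
  have hπinj : Function.Injective π := by
    intro i j h
    apply hinj
    apply σ.injective
    rw [← hπ, ← hπ, h]
  simp only [map_sum, map_div₀, map_mul, map_pow, map_add, ← hπ]
  exact sum_Ioi_perm (fun i j ↦ r i * r j / (r i + r j) ^ 2)
    (fun i j ↦ by rw [mul_comm, add_comm])
    (Equiv.ofBijective π (Finite.injective_iff_bijective.mp hπinj))
end

section
/- Let K be a field of characteristic 2, let F ∈ K[x] be a separable polynomial of degree n ≥ 1 with roots r₁, …, r_n in a splitting field L, and set β = Σ_{1≤i<j≤n} r_i / (r_i + r_j) ∈ L. Then β² + β = Berl(F). Moreover, if K = 𝔽_q is finite, then β ∈ 𝔽_q if and only if the permutation of the roots r₁, …, r_n induced by the Frobenius map x ↦ x^q is an even permutation. -/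
/-!
In characteristic two each term `t = r i / (r i + r j)` satisfies
`t ^ 2 + t = r i * r j / (r i + r j) ^ 2`, and summing gives the first claim.

For the second, `β` lies in `𝔽_q` if and only if it is fixed by the `q`-power map
(`mem_range_iff_pow_card`). That map replaces each root `r i` by `r (σ i)`. Since
`r i / (r i + r j) + r j / (r i + r j) = 1`, each inversion of `σ` adds `1` to the sum, so
`β ^ q` equals `β` when `σ` is even and `β + 1` when `σ` is odd (`sum_pairs_comp_perm`).
-/

open Polynomial

/-- The inversion parity, as a homomorphism from signs to a characteristic-two ring:
it sends `1` to `0` and `-1` to `1`. -/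
def signParity (M : Type*) [CommRing M] [CharP M 2] : Additive ℤˣ →+ M where
  toFun u := if u.toMul = 1 then 0 else 1
  map_zero' := by simp
  map_add' u v := by
    rcases Int.units_eq_one_or u.toMul with h | h <;>
    rcases Int.units_eq_one_or v.toMul with h' | h' <;>
    simp [h, h', CharTwo.add_self_eq_zero]

lemma sum_inversions {M : Type*} [CommRing M] [CharP M 2] {n : ℕ} (σ : Equiv.Perm (Fin n)) :
    ∑ i : Fin n, ∑ j ∈ Finset.Ioi i, (if σ i < σ j then (0 : M) else 1) =
      if Equiv.Perm.sign σ = 1 then 0 else 1 := by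
  have h : signParity M (Additive.ofMul (Equiv.Perm.sign σ)) =
      ∑ i : Fin n, ∑ j ∈ Finset.Ioi i, (if σ i < σ j then (0 : M) else 1) := by
    rw [σ.sign_eq_prod_prod_Ioi]
    simp only [ofMul_prod, map_sum]
    refine Finset.sum_congr rfl fun i _ => Finset.sum_congr rfl fun j _ => ?_
    split_ifs <;> simp [signParity]
  rw [← h]
  rfl

/-- If `t a b + t b a = 1` off the diagonal, permuting the indices of `∑_{i<j} t i j` changes
the sum by the number of inversions, so in characteristic two by the parity of the permutation. -/
lemma sum_pairs_comp_perm {M : Type*} [CommRing M] [CharP M 2] {n : ℕ} (t : Fin n → Fin n → M)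
    (ht : ∀ a b, a ≠ b → t a b + t b a = 1) (σ : Equiv.Perm (Fin n)) :
    ∑ i : Fin n, ∑ j ∈ Finset.Ioi i, t (σ i) (σ j) =
      (∑ i : Fin n, ∑ j ∈ Finset.Ioi i, t i j) + if Equiv.Perm.sign σ = 1 then 0 else 1 := by
  have toPairs : ∀ f : Fin n → Fin n → M, ∑ i : Fin n, ∑ j ∈ Finset.Ioi i, f i j =
      ∑ x ∈ Equiv.Perm.finPairsLT n, f x.2 x.1 := by
    intro f
    rw [Finset.sum_sigma']
    refine Finset.sum_nbij' (fun x => ⟨x.2, x.1⟩) (fun x => ⟨x.2, x.1⟩) ?_ ?_ ?_ ?_ ?_ <;>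
      simp [Equiv.Perm.mem_finPairsLT]
  -- reindex along the bijection sending `{i, j}` to `{σ i, σ j}`, listed in order
  have reindex : ∑ x ∈ Equiv.Perm.finPairsLT n,
      t (Equiv.Perm.signBijAux σ x).2 (Equiv.Perm.signBijAux σ x).1 =
      ∑ x ∈ Equiv.Perm.finPairsLT n, t x.2 x.1 :=
    Finset.sum_nbij (Equiv.Perm.signBijAux σ) Equiv.Perm.signBijAux_mem
      Equiv.Perm.signBijAux_injOn Equiv.Perm.signBijAux_surj (fun _ _ => rfl)
  rw [← sum_inversions (M := M) σ, toPairs t, toPairs (fun i j => t (σ i) (σ j)), toPairs,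
    ← reindex, ← Finset.sum_add_distrib]
  refine Finset.sum_congr rfl fun x hx => ?_
  have hne : σ x.2 ≠ σ x.1 := fun h =>
    (Equiv.Perm.mem_finPairsLT.1 hx).ne (σ.injective h)
  unfold Equiv.Perm.signBijAux
  rcases lt_or_gt_of_ne hne with h | h
  · simp [h]
  · simp only [dif_neg h.not_gt, if_neg h.not_gt]
    rw [← ht _ _ hne, add_comm (t (σ x.2) (σ x.1)), ← add_assoc, CharTwo.add_self_eq_zero,
      zero_add]

/-- The image of a finite field in an extension is the fixed field of the `q`-power map, because
the elements of `K` already account for all roots of `X ^ q - X`. -/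
lemma mem_range_iff_pow_card (K L : Type*) [Field K] [Fintype K] [Field L] [Algebra K L] (x : L) :
    x ∈ (algebraMap K L).range ↔ x ^ Fintype.card K = x := by
  constructor
  · rintro ⟨a, rfl⟩
    rw [← map_pow, FiniteField.pow_card]
  · intro h
    have hs : (X ^ Fintype.card K - X : K[X]).Splits := by
      simpa using Polynomial.splits_X_pow_nat_card_sub_X (K := K)
    have h0 : (X ^ Fintype.card K - X : L[X]) ≠ 0 :=
      FiniteField.X_pow_card_sub_X_ne_zero L Fintype.one_lt_card
    have hx : x ∈ ((X ^ Fintype.card K - X : K[X]).map (algebraMap K L)).roots := by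
      simp [h0, h]
    rw [hs.roots_map] at hx
    obtain ⟨a, -, ha⟩ := Multiset.mem_map.1 hx
    exact ⟨a, ha⟩


open Polynomial

theorem berlekamp_beta_and_frobenius
    (K : Type*) [Field K] [CharP K 2]
    (L : Type*) [Field L] [Algebra K L]
    (n : ℕ) (hn : 1 ≤ n)
    (F : Polynomial K) (hsep : F.Separable) (hdeg : F.natDegree = n)
    [Polynomial.IsSplittingField K L F]
    (r : Fin n → L)
    (hroots : F.map (algebraMap K L) = C (algebraMap K L F.leadingCoeff) *
      ∏ i : Fin n, (X - C (r i)))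
    (β : L) (hβ : β = ∑ i : Fin n, ∑ j ∈ Finset.Ioi i, r i / (r i + r j)) :
    β ^ 2 + β = ∑ i : Fin n, ∑ j ∈ Finset.Ioi i, r i * r j / (r i + r j) ^ 2 ∧
      ∀ (hK : Fintype K) (σ : Equiv.Perm (Fin n)),
        (∀ i, r (σ i) = r i ^ (@Fintype.card K hK)) →
        (β ∈ (algebraMap K L).range ↔ Equiv.Perm.sign σ = 1) := by
  have : CharP L 2 := charP_of_injective_algebraMap (algebraMap K L).injective 2
  have hF : F ≠ 0 := hsep.ne_zero
  have hinj : Function.Injective r := by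
    have h1 := hsep.map (f := algebraMap K L)
    rw [hroots] at h1
    exact separable_prod_X_sub_C_iff.1 h1.of_mul_right
  have hne : ∀ i j, i ≠ j → r i + r j ≠ 0 := fun i j hij h =>
    hij (hinj (CharTwo.add_eq_zero.1 h))
  refine ⟨?_, ?_⟩
  · rw [hβ, CharTwo.sum_sq, ← Finset.sum_add_distrib]
    refine Finset.sum_congr rfl fun i _ => ?_
    rw [CharTwo.sum_sq, ← Finset.sum_add_distrib]
    refine Finset.sum_congr rfl fun j hj => ?_
    have := hne i j (Finset.mem_Ioi.1 hj).ne
    field_simp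
    linear_combination (r i) ^ 2 * CharTwo.two_eq_zero (R := L)
  · intro hK σ hσ
    obtain ⟨k, hp, hk⟩ := FiniteField.card K 2
    have hpow : β ^ Fintype.card K =
        ∑ i : Fin n, ∑ j ∈ Finset.Ioi i, r (σ i) / (r (σ i) + r (σ j)) := by
      rw [hβ]
      simp only [hσ, hk, sum_pow_char_pow, div_pow, add_pow_char_pow]
    rw [mem_range_iff_pow_card, hpow,
      sum_pairs_comp_perm (fun a b => r a / (r a + r b)) _ σ, ← hβ]
    · split_ifs with h <;> simp [h]
    · intro a b hab
      rw [add_comm (r b), ← add_div, div_self (hne a b hab)]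
end

section
/- Let R be a commutative ring and let f ∈ R[x] be a monic polynomial of degree n that splits as f(x) = ∏_{i=1}^n (x − r_i) with r₁, …, r_n ∈ R. Then the resultant of f(x) and f(−x) (taken as polynomials of degree n) satisfies Res(f(x), f(−x)) = 2^n · f(0) · ∏_{1≤i<j≤n} (r_i + r_j)². -/
/-!
For polynomials within the degree bounds, `resultant` agrees with Mathlib's `Polynomial.resultant`:
the two Sylvester matrices differ by a transposition and the reversal of both index sets
(`resultant_eq_mathlib_resultant`). Multiplicativity in the monic linear factors of `f` then gives
`Res(f, f(-x)) = ∏ i, f(-r i) = ∏ i, ∏ j, -(r i + r j)` over any commutative ring. The diagonal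
factors `-2 r i` account for `2 ^ n * f(0)`. The off-diagonal signs cancel in pairs `(i, j)`,
`(j, i)`, and those pairs give the squares.
-/

open Polynomial

/-- The Sylvester matrix of `f` and `g`, viewed as polynomials of degree (at most)
`m` and `n` respectively. -/
noncomputable def sylvester {R : Type*} [CommRing R] (m n : ℕ) (f g : Polynomial R) :
    Matrix (Fin (n + m)) (Fin (n + m)) R :=
  Matrix.of fun i j =>
    Fin.addCases
      (fun i₁ : Fin n => if (j : ℕ) ≤ m + (i₁ : ℕ) then f.coeff (m + (i₁ : ℕ) - j) else 0)
      (fun i₂ : Fin m => if (j : ℕ) ≤ n + (i₂ : ℕ) then g.coeff (n + (i₂ : ℕ) - j) else 0) i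

/-- The resultant of `f` and `g`, viewed as polynomials of degree `m` and `n`
respectively: the determinant of the Sylvester matrix. -/
noncomputable def resultant {R : Type*} [CommRing R] (m n : ℕ) (f g : Polynomial R) : R :=
  (sylvester m n f g).det

/-- The degree bounds are needed because Mathlib's Sylvester matrix truncates the coefficients of
`f` and `g` at `m` and `n`, while the one used here does not. -/
lemma resultant_eq_mathlib_resultant {R : Type*} [CommRing R] (m n : ℕ) (f g : Polynomial R)
    (hf : f.natDegree ≤ m) (hg : g.natDegree ≤ n) :
    _root_.resultant m n f g = Polynomial.resultant f g m n := by
  have key : _root_.sylvester m n f g =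
      (Polynomial.sylvester f g m n).transpose.submatrix
        (Fin.revPerm.trans (finCongr (Nat.add_comm n m)))
        (Fin.revPerm.trans (finCongr (Nat.add_comm n m))) := by
    ext i j
    have hj := j.isLt
    induction i using Fin.addCases with
    | left i =>
      have hi := i.isLt
      have e : (Fin.revPerm.trans (finCongr (Nat.add_comm n m))) (Fin.castAdd m i) =
          Fin.natAdd m i.rev := by
        ext; simp; omega
      rw [Matrix.submatrix_apply, e]
      simp only [_root_.sylvester, Polynomial.sylvester, Matrix.of_apply, Matrix.transpose_apply,
        Fin.addCases_left, Fin.addCases_right, Set.mem_Icc, Equiv.trans_apply, Fin.revPerm_apply,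
        finCongr_apply, Fin.val_cast, Fin.val_rev]
      split_ifs
      · congr 1; omega
      · exact coeff_eq_zero_of_natDegree_lt (by omega)
      · omega
      · rfl
    | right i =>
      have hi := i.isLt
      have e : (Fin.revPerm.trans (finCongr (Nat.add_comm n m))) (Fin.natAdd n i) =
          Fin.castAdd n i.rev := by
        ext; simp; omega
      rw [Matrix.submatrix_apply, e]
      simp only [_root_.sylvester, Polynomial.sylvester, Matrix.of_apply, Matrix.transpose_apply,
        Fin.addCases_left, Fin.addCases_right, Set.mem_Icc, Equiv.trans_apply, Fin.revPerm_apply,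
        finCongr_apply, Fin.val_cast, Fin.val_rev]
      split_ifs
      · congr 1; omega
      · exact coeff_eq_zero_of_natDegree_lt (by omega)
      · omega
      · rfl
  rw [_root_.resultant, key, Matrix.det_submatrix_equiv_self, Matrix.det_transpose,
    Polynomial.resultant]

/-- Splits a product over all pairs into its diagonal and the pairs `{(i, j), (j, i)}`. -/
lemma prod_prod_eq_prod_diag_mul {R : Type*} [CommRing R] {n : ℕ} (F : Fin n → Fin n → R) :
    ∏ i, ∏ j, F i j = (∏ i, F i i) * ∏ i, ∏ j ∈ Finset.Ioi i, F j i * F i j := by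
  rw [Finset.prod_comm, Finset.prod_prod_Ioi_mul_eq_prod_prod_off_diag, ← Finset.prod_mul_distrib]
  refine Finset.prod_congr rfl fun i _ => ?_
  rw [Fintype.prod_eq_mul_prod_compl i]

theorem resultant_comp_neg_eq_discPlus
    (R : Type*) [CommRing R] (n : ℕ) (r : Fin n → R)
    (f : Polynomial R) (hf : f = ∏ i : Fin n, (X - C (r i))) :
    resultant n n f (f.comp (-X)) =
      2 ^ n * f.eval 0 * ∏ i : Fin n, ∏ j ∈ Finset.Ioi i, (r i + r j) ^ 2 := by
  nontriviality R
  have hdeg : f.natDegree = n := by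
    rw [hf, natDegree_prod_of_monic _ _ fun i _ => monic_X_sub_C (r i)]
    simp
  have hdeg' : (f.comp (-X)).natDegree ≤ n :=
    natDegree_comp_le.trans (by simp [hdeg])
  have heval (i : Fin n) : (f.comp (-X)).eval (r i) = ∏ j, -(r i + r j) := by
    rw [hf, eval_comp, eval_prod]
    refine Finset.prod_congr rfl fun j _ => ?_
    simp only [eval_neg, eval_X, eval_sub, eval_C]
    ring
  have hres : Polynomial.resultant f (f.comp (-X)) n n = ∏ i, ∏ j, -(r i + r j) := by
    have h := resultant_prod_left Finset.univ (fun i => X - C (r i)) (f.comp (-X)) n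
      (by simp) hdeg'
    rw [← hf, hdeg] at h
    rw [h]
    refine Finset.prod_congr rfl fun i _ => ?_
    rw [natDegree_X_sub_C, resultant_X_sub_C_left _ _ _ hdeg', heval]
  have hzero : (∏ i, -(r i + r i)) = 2 ^ n * f.eval 0 := by
    have h2 : (2 : R) ^ n = ∏ _i : Fin n, 2 := by simp
    rw [h2, hf, eval_prod, ← Finset.prod_mul_distrib]
    refine Finset.prod_congr rfl fun i _ => ?_
    simp only [eval_X, eval_sub, eval_C]
    ring
  rw [resultant_eq_mathlib_resultant n n f _ hdeg.le hdeg', hres, prod_prod_eq_prod_diag_mul, hzero]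
  congr 1
  refine Finset.prod_congr rfl fun i _ => Finset.prod_congr rfl fun j _ => ?_
  ring
end

section
/- Let K be a field, let A' be a finite set of variables and t an additional variable, and let f, g ∈ K[A'][t] be polynomials that are homogeneous of total degrees d_f and d_g respectively as polynomials in the variables A' ∪ {t}, with degrees n_f = deg_t f and n_g = deg_t g in the variable t. Then the resultant Res_t(f, g) ∈ K[A'] (taken with respect to the degrees n_f and n_g in t) is a homogeneous polynomial in the variables A' of degree d_f·n_g + n_f·d_g − n_f·n_g (or the zero polynomial). -/
/-!
The Sylvester matrix is graded. Assign to its rows the weight `dF - nF - i` (for the `i`-th row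
made of coefficients of `f`) or `dG - nG - i` (for the `i`-th row made of coefficients of `g`), and
to column `j` the weight `j`. Since the coefficient of `t ^ k` in `f` (resp. `g`) is homogeneous of
degree `dF - k` (resp. `dG - k`), every nonzero entry is homogeneous, of degree the sum of the
weights of its row and column. Hence every nonzero term of the Leibniz expansion of the determinant
is homogeneous, of degree the sum of all weights, and
`nG * (dF - nF) + nF * (dG - nG) - ∑_{i<nG} i - ∑_{i<nF} i + ∑_{j<nG+nF} j`
equals `dF * nG + nF * dG - nF * nG`.
To remain in `ℕ`, row weights are written as differences `s i - r i`, so that the degree `e` of the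
entry `(i, j)` is characterised by `e + r i = s i + j` (`det_isHomogeneous_of_graded`).
-/

open Polynomial MvPolynomial

/-- A determinant is homogeneous if its nonzero entries `M i j` are homogeneous of degree
`s i - r i + c j`, the sum of a row weight and a column weight. -/
lemma det_isHomogeneous_of_graded {K σ ι : Type*} [CommRing K] [Fintype ι] [DecidableEq ι]
    (M : Matrix ι ι (MvPolynomial σ K)) (r s c : ι → ℕ) (d : ℕ)
    (hM : ∀ i j, M i j ≠ 0 → ∃ e, (M i j).IsHomogeneous e ∧ e + r i = s i + c j)
    (hd : d + ∑ i, r i = ∑ i, s i + ∑ j, c j) : M.det.IsHomogeneous d := by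
  rw [Matrix.det_apply]
  refine MvPolynomial.IsHomogeneous.sum _ _ _ fun p _ => ?_
  have key : (∏ i, M (p i) i).IsHomogeneous d := by
    by_cases h : ∃ i, M (p i) i = 0
    · obtain ⟨i, hi⟩ := h
      have h0 : ∏ i, M (p i) i = 0 := Finset.prod_eq_zero (Finset.mem_univ i) hi
      exact h0 ▸ MvPolynomial.isHomogeneous_zero _ _ _
    · push Not at h
      choose e he hes using fun i => hM (p i) i (h i)
      have hsum : ∑ i, e i = d := by
        have h1 : ∑ i, (e i + r (p i)) = ∑ i, (s (p i) + c i) :=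
          Finset.sum_congr rfl fun i _ => hes i
        rw [Finset.sum_add_distrib, Finset.sum_add_distrib, Equiv.sum_comp p r,
          Equiv.sum_comp p s] at h1
        omega
      exact hsum ▸ MvPolynomial.IsHomogeneous.prod _ _ _ fun i _ => he i
  rcases Int.units_eq_one_or (Equiv.Perm.sign p) with h | h
  · simpa [h] using key
  · simpa [h] using key.neg

lemma coeff_optionEquivLeft_isHomogeneous {K σ : Type*} [CommRing K] [Finite σ]
    {f : MvPolynomial (Option σ) K} {d k e : ℕ} (hf : f.IsHomogeneous d) (h : e + k = d) :
    ((optionEquivLeft K σ f).coeff k).IsHomogeneous e := by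
  refine MvPolynomial.IsHomogeneous.coeff_isHomogeneous_of_optionEquivLeft_symm (n := d) ?_ k e
    (by omega)
  simpa using hf

lemma natDegree_optionEquivLeft_le {K σ : Type*} [CommRing K]
    {f : MvPolynomial (Option σ) K} {d : ℕ} (hf : f.IsHomogeneous d) :
    (optionEquivLeft K σ f).natDegree ≤ d := by
  rw [natDegree_optionEquivLeft]
  exact (degreeOf_le_totalDegree _ _).trans hf.totalDegree_le

/-- The coefficient of index `a - j` of the homogeneous form `f` (the general nonzero entry of the
Sylvester matrix) has degree `d - (a - j)`. -/
lemma exists_degree_entry {K σ : Type*} [CommRing K] [Finite σ]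
    {f : MvPolynomial (Option σ) K} {d a j : ℕ} (hf : f.IsHomogeneous d)
    (h : (if j ≤ a then (optionEquivLeft K σ f).coeff (a - j) else 0) ≠ 0) :
    ∃ e, (if j ≤ a then (optionEquivLeft K σ f).coeff (a - j) else 0).IsHomogeneous e ∧
      e + a = d + j := by
  have hj : j ≤ a := by
    by_contra hj
    exact h (if_neg hj)
  rw [if_pos hj] at h ⊢
  have h1 := le_natDegree_of_ne_zero h
  have h2 := natDegree_optionEquivLeft_le hf
  exact ⟨d - (a - j), coeff_optionEquivLeft_isHomogeneous hf (by omega), by omega⟩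

/-- A homogeneous polynomial in the variables `A' ∪ {t}` (the variable `t` is `none`),
viewed as a polynomial in `t` over `K[A']`, has a resultant which is homogeneous in the
variables `A'` of the predicted degree.  -/
theorem resultant_isHomogeneous
    (K : Type*) [Field K] (σ : Type*) [Finite σ]
    (f g : MvPolynomial (Option σ) K)
    (dF dG nF nG : ℕ)
    (hf : f.IsHomogeneous dF) (hg : g.IsHomogeneous dG)
    (hnf : ((optionEquivLeft K σ) f).natDegree = nF)
    (hng : ((optionEquivLeft K σ) g).natDegree = nG) :
    (resultant nF nG ((optionEquivLeft K σ) f) ((optionEquivLeft K σ) g)).IsHomogeneous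
      (dF * nG + nF * dG - nF * nG) := by
  have hF : nF ≤ dF := hnf ▸ natDegree_optionEquivLeft_le hf
  refine det_isHomogeneous_of_graded _
    (Fin.addCases (fun i : Fin nG => nF + (i : ℕ)) (fun i : Fin nF => nG + (i : ℕ)))
    (Fin.addCases (fun _ : Fin nG => dF) (fun _ : Fin nF => dG))
    (fun j => (j : ℕ)) _ (fun i j hij => ?_) ?_
  · induction i using Fin.addCases with
    | left i =>
      simp only [_root_.sylvester, Matrix.of_apply, Fin.addCases_left] at hij ⊢
      exact exists_degree_entry hf hij
    | right i =>
      simp only [_root_.sylvester, Matrix.of_apply, Fin.addCases_right] at hij ⊢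
      exact exists_degree_entry hg hij
  · simp only [Fin.sum_univ_add, Fin.addCases_left, Fin.addCases_right, Finset.sum_add_distrib,
      Fin.val_castAdd, Fin.val_natAdd, Finset.sum_const, Finset.card_univ, Fintype.card_fin,
      smul_eq_mul]
    -- `nF ≤ dF` makes the subtraction in the target degree a genuine one.
    have h1 : nF * nG ≤ dF * nG := Nat.mul_le_mul_right _ hF
    have h2 := Nat.sub_add_cancel (h1.trans (Nat.le_add_right _ (nF * dG)))
    linarith
end

section
/- Let q be an even prime power, let n > 2 and r ≥ 1, and let α₁, …, α_r ∈ 𝔽_q[x] be distinct polynomials with deg α_j < n. Let 𝔽̄_q be an algebraic closure of 𝔽_q, let U₀, …, U_{n−1} be indeterminates, let E = 𝔽̄_q(U₀, …, U_{n−1}), and let 𝓕 = x^n + U_{n−1}x^{n−1} + ⋯ + U₁x + U₀ ∈ E[x]. Let F be the splitting field of ∏_{i=1}^r (𝓕 + α_i) over E. Then the Galois group Gal(F/E) is isomorphic to the direct product S_n^r of r copies of the symmetric group on n letters. -/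
open Polynomial
open scoped Classical

/-!
Write `f i = 𝓕 + α i`, let `L` be the splitting field of the product, `G` its Galois group over `E`,
and `B` the integral closure of `R = K[U]` in `L`, where `K` is the algebraic closure of `Fq`.
Permuting the roots of each `f i` embeds `G` in the product of symmetric groups. For surjectivity it
suffices to find, for each `i` and each transposition, an element of `G` acting by that transposition
on the roots of `f i` and trivially on the roots of every other `f j`.

Such an element is found in an inertia group at a closed point. The homomorphisms `χ : B → K` of
`K`-algebras over a given point of `R` are permuted transitively by `G` (`exists_galois_conj`), and as
the residue field is `K` itself, the stabilizer of `χ` is its inertia group: `χ ∘ σ = χ`. The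
roots `t` of `f i` are algebraically independent (`injective_aeval_roots`), so they can be specialized
at will (`exists_point`); specializing to distinct values shows that `G` induces every permutation of
`t` (`exists_perm_roots`). Since `K[t]` is integrally closed, transitivity applies over it too, and
every permutation of `t` preserving the values `χ (t k)` is induced by some `σ` with `χ ∘ σ = χ`
(`exists_perm_roots_fixing_point`).

Choose `χ` so that `f i` specializes to `(x - c)^(n-1) (x - d)`, with `d` at an index outside the given
transposition, which is possible as `n > 2`. Each other `f j` specializes to this polynomial plus
`α j - α i`, and for suitable `c` and `d` it has distinct roots (`exists_separating_point`). Then `σ`,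
being in the inertia group at `χ`, fixes every root of `f j`. The argument works in every
characteristic.
-/

namespace GenericGalois

/-! ### Points of integral closures -/

/-- Let `B` be the integral closure of `A` in a finite Galois extension `L` of `Frac A`. Two
`K`-points of `B` over the same point of `A` differ by a Galois automorphism `σ`: `χ ∘ σ = χ'`.
The equation is stated through `b' = σ b` in `L`, so that no action on `B` has to be fixed. -/
theorem exists_galois_conj {K A M L B : Type*} [Field K] [CommRing A] [Algebra K A]
    [IsIntegrallyClosed A] [Field M] [Field L] [Algebra A M] [IsFractionRing A M]
    [Algebra M L] [Algebra A L] [IsScalarTower A M L] [FiniteDimensional M L] [IsGalois M L]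
    [CommRing B] [Algebra A B] [Algebra B L] [IsScalarTower A B L] [IsIntegralClosure B A L]
    [IsFractionRing B L]
    [Algebra K B] [IsScalarTower K A B] (χ χ' : B →ₐ[K] K)
    (h : ∀ a : A, χ (algebraMap A B a) = χ' (algebraMap A B a)) :
    ∃ σ : L ≃ₐ[M] L, ∀ b b' : B, algebraMap B L b' = σ (algebraMap B L b) → χ b' = χ' b := by
  let := IsIntegralClosure.MulSemiringAction A M L B
  have := Algebra.isInvariant_of_isGalois A M L B
  have : SMulCommClass (L ≃ₐ[M] L) A B := ⟨fun g a b => by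
    change galRestrict A M L B g (a • b) = a • galRestrict A M L B g b
    exact map_smul _ _ _⟩
  have := RingHom.ker_isPrime (χ : B →+* K)
  have := RingHom.ker_isPrime (χ' : B →+* K)
  obtain ⟨g, hg⟩ := Algebra.IsInvariant.exists_smul_of_under_eq A B (L ≃ₐ[M] L)
    (RingHom.ker (χ' : B →+* K)) (RingHom.ker (χ : B →+* K)) (by
      ext a
      simp [Ideal.under, RingHom.mem_ker, h])
  refine ⟨g, fun b b' hb => ?_⟩
  have hb' : b' = g • b := by
    apply IsIntegralClosure.algebraMap_injective B A L
    rw [hb]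
    exact (algebraMap_galRestrict_apply A g b).symm
  -- `b` differs from the constant `χ' b` by an element of `ker χ'`, which `g` moves into `ker χ`
  have hk : b - algebraMap K B (χ' b) ∈ RingHom.ker (χ' : B →+* K) := by simp [RingHom.mem_ker]
  have := Ideal.smul_mem_pointwise_smul g _ _ hk
  rw [← hg, RingHom.mem_ker, smul_sub, ← hb', IsScalarTower.algebraMap_apply K A B,
    smul_algebraMap, ← IsScalarTower.algebraMap_apply, map_sub, sub_eq_zero] at this
  exact this.trans (χ.commutes _)

/-- Lying over for `K`-points: since `K` is algebraically closed, the residue field of a maximal ideal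
of `B` over a `K`-point of `A` is again `K`. -/
theorem exists_point_over {K A B : Type*} [Field K] [IsAlgClosed K] [CommRing A] [CommRing B]
    [Algebra K A] [Algebra A B] [Algebra K B] [IsScalarTower K A B] [Algebra.IsIntegral A B]
    (hinj : Function.Injective (algebraMap A B)) (e : A →ₐ[K] K) :
    ∃ χ : B →ₐ[K] K, ∀ a, χ (algebraMap A B a) = e a := by
  have he : Function.Surjective e := fun x => ⟨algebraMap K A x, by simp⟩
  have : (RingHom.ker e).IsMaximal := RingHom.ker_isMaximal_of_surjective e he
  obtain ⟨Q, hQ, hQA⟩ := Ideal.exists_ideal_over_maximal_of_isIntegral (S := B) (RingHom.ker e)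
    (by rw [(RingHom.injective_iff_ker_eq_bot _).1 hinj]; exact bot_le)
  have hmem : ∀ a : A, algebraMap A B a - algebraMap K B (e a) ∈ Q := by
    intro a
    have : a - algebraMap K A (e a) ∈ RingHom.ker e := by simp [RingHom.mem_ker]
    rw [← hQA, Ideal.mem_comap, map_sub, ← IsScalarTower.algebraMap_apply] at this
    exact this
  have : Algebra.IsIntegral K (B ⧸ Q) := ⟨fun x => by
    obtain ⟨b, rfl⟩ := Ideal.Quotient.mk_surjective x
    obtain ⟨p, hp, hpb⟩ := Algebra.IsIntegral.isIntegral (R := A) b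
    refine ⟨p.map e.toRingHom, hp.map _, ?_⟩
    have hc : (algebraMap K (B ⧸ Q)).comp e.toRingHom
        = (Ideal.Quotient.mk Q).comp (algebraMap A B) := by
      ext a
      exact (Ideal.Quotient.eq.2 (hmem a)).symm
    rw [eval₂_map, hc, ← hom_eval₂, hpb, map_zero]⟩
  let f := AlgEquiv.ofBijective (Algebra.ofId K (B ⧸ Q))
    (IsAlgClosed.algebraMap_bijective_of_isIntegral (k := K) (K := B ⧸ Q))
  refine ⟨f.symm.toAlgHom.comp (Ideal.Quotient.mkₐ K Q), fun a => ?_⟩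
  change f.symm (Ideal.Quotient.mk Q _) = _
  rw [AlgEquiv.symm_apply_eq, Ideal.Quotient.eq.2 (hmem a)]
  rfl

/-! ### The generic polynomial and its translates -/

/-- The generic monic polynomial `x^n + U_{n-1} x^{n-1} + ⋯ + U_0` over `K[U_0, …, U_{n-1}]`. -/
noncomputable def generic (K : Type*) [Field K] (n : ℕ) : (MvPolynomial (Fin n) K)[X] :=
  X ^ n + ∑ i : Fin n, C (MvPolynomial.X i) * X ^ (i : ℕ)

/-- The translate `𝓕 + α` of the generic polynomial by a polynomial `α` with constant coefficients. -/
noncomputable def shifted {K : Type*} [Field K] (n : ℕ) (α : K[X]) : (MvPolynomial (Fin n) K)[X] :=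
  generic K n + α.map MvPolynomial.C

section
variable {K : Type*} [Field K] {n : ℕ}

theorem degree_lower {S : Type*} [CommRing S] (u : Fin n → S) :
    (∑ i : Fin n, C (u i) * X ^ (i : ℕ)).degree < (n : WithBot ℕ) := by
  refine (degree_sum_le _ _).trans_lt ((Finset.sup_lt_iff (WithBot.bot_lt_coe n)).2 fun i _ => ?_)
  exact (degree_C_mul_X_pow_le _ _).trans_lt (WithBot.coe_lt_coe.2 i.2)

theorem monic_shifted {α : K[X]} (hα : α.degree < n) : (shifted n α).Monic := by
  rw [shifted, generic, add_assoc]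
  refine monic_X_pow_add ?_
  refine (degree_add_le _ _).trans_lt (max_lt (degree_lower _) ?_)
  exact degree_map_le.trans_lt hα

theorem natDegree_shifted {α : K[X]} (hα : α.degree < n) : (shifted n α).natDegree = n := by
  rw [shifted, generic, add_assoc]
  refine natDegree_eq_of_degree_eq_some ?_
  rw [degree_add_eq_left_of_degree_lt, degree_X_pow]
  rw [degree_X_pow]
  refine (degree_add_le _ _).trans_lt (max_lt (degree_lower _) ?_)
  exact degree_map_le.trans_lt hα

variable {S : Type*} [CommRing S] [Algebra K S]

theorem map_shifted (α : K[X]) (ρ : MvPolynomial (Fin n) K →ₐ[K] S) :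
    (shifted n α).map (ρ : MvPolynomial (Fin n) K →+* S) =
      X ^ n + ∑ i : Fin n, C (ρ (MvPolynomial.X i)) * X ^ (i : ℕ) + α.map (algebraMap K S) := by
  rw [shifted, generic, Polynomial.map_add, Polynomial.map_map]
  congr 1
  · simp [Polynomial.map_sum]
  · congr 1
    ext x
    simp [← MvPolynomial.algebraMap_eq]

theorem coeff_lower (u : Fin n → S) (k : Fin n) :
    (X ^ n + ∑ i : Fin n, C (u i) * X ^ (i : ℕ)).coeff k = u k := by
  rw [coeff_add, coeff_X_pow, if_neg k.2.ne, finsetSum_coeff, zero_add,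
    Finset.sum_eq_single k]
  · simp
  · intro b _ hb
    rw [coeff_C_mul_X_pow, if_neg]
    exact fun h => hb (Fin.ext h.symm)
  · simp

theorem coord_eq (α : K[X]) (ρ : MvPolynomial (Fin n) K →ₐ[K] S) (k : Fin n) :
    ρ (MvPolynomial.X k) =
      ((shifted n α).map (ρ : MvPolynomial (Fin n) K →+* S) - α.map (algebraMap K S)).coeff k := by
  rw [map_shifted, add_sub_cancel_right, coeff_lower (fun i => ρ (MvPolynomial.X i))]

/-- A point of affine space is determined by the specialization of `𝓕 + α` at it. -/
theorem hom_ext_of_shifted (α : K[X]) (ρ ρ' : MvPolynomial (Fin n) K →ₐ[K] S)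
    (h : (shifted n α).map (ρ : MvPolynomial (Fin n) K →+* S) =
      (shifted n α).map (ρ' : MvPolynomial (Fin n) K →+* S)) : ρ = ρ' := by
  refine MvPolynomial.algHom_ext fun k => ?_
  rw [coord_eq α, coord_eq α, h]

/-- Every monic polynomial of degree `n` is a specialization of `𝓕 + α`. -/
theorem exists_hom_of_monic [Nontrivial S] {α : K[X]} (hα : α.degree < n) {p : S[X]} (hp : p.Monic)
    (hpn : p.natDegree = n) : ∃ ρ : MvPolynomial (Fin n) K →ₐ[K] S,
      (shifted n α).map (ρ : MvPolynomial (Fin n) K →+* S) = p := by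
  refine ⟨MvPolynomial.aeval fun k => (p - α.map (algebraMap K S)).coeff k, ?_⟩
  have hdeg : (α.map (algebraMap K S)).degree < p.degree := by
    rw [degree_eq_natDegree hp.ne_zero, hpn]
    exact degree_map_le.trans_lt hα
  have hm : (p - α.map (algebraMap K S)).Monic := hp.sub_of_left hdeg
  have hn : (p - α.map (algebraMap K S)).natDegree = n := by
    rw [natDegree_eq_of_degree_eq (degree_sub_eq_left_of_degree_lt hdeg), hpn]
  have := hm.as_sum
  rw [hn, ← Fin.sum_univ_eq_sum_range
    (fun i => C ((p - α.map (algebraMap K S)).coeff i) * X ^ i)] at this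
  rw [map_shifted]
  simp only [MvPolynomial.aeval_X]
  rw [← this, sub_add_cancel]
end

/-- Version of `exists_galois_conj` for an integrally closed ring `A` between `R` and its integral
closure `B`: points of `B` agreeing on `A` are conjugate under the automorphisms of `L / E` that
fix `A`, because `B` is also the integral closure of `A` and `L / Frac A` is again Galois. -/
theorem exists_galois_conj_fixing {K R E L B : Type*} [Field K] [CommRing R] [Field E] [Field L]
    [CommRing B] [Algebra K B] [Algebra R E] [IsFractionRing R E] [Algebra E L] [Algebra R L]
    [IsScalarTower R E L] [FiniteDimensional E L] [IsGalois E L] [Algebra R B] [Algebra B L]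
    [IsScalarTower R B L] [IsIntegralClosure B R L] [IsFractionRing B L]
    (A : Subalgebra K B) [IsIntegrallyClosed A] (hA : ∀ x : R, algebraMap R B x ∈ A)
    (χ χ' : B →ₐ[K] K) (h : ∀ a ∈ A, χ a = χ' a) :
    ∃ σ : L ≃ₐ[E] L, (∀ a ∈ A, σ (algebraMap B L a) = algebraMap B L a) ∧
      ∀ b b' : B, algebraMap B L b' = σ (algebraMap B L b) → χ b' = χ' b := by
  have hBL : Function.Injective (algebraMap B L) := IsIntegralClosure.algebraMap_injective B R L
  have : IsDomain B := hBL.isDomain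
  let : Algebra R A := ((algebraMap R B).codRestrict A.toSubring hA).toAlgebra
  have : IsScalarTower R A B := .of_algebraMap_eq fun _ => rfl
  have : IsScalarTower R A L := .of_algebraMap_eq fun x => by
    rw [IsScalarTower.algebraMap_apply A B L, ← IsScalarTower.algebraMap_apply R A B,
      ← IsScalarTower.algebraMap_apply R B L]
  have hAL : Function.Injective (algebraMap A L) := by
    rw [IsScalarTower.algebraMap_eq A B L]
    exact hBL.comp Subtype.val_injective
  have : FaithfulSMul A L := (faithfulSMul_iff_algebraMap_injective A L).2 hAL
  let M := FractionRing A
  let : Algebra M L := FractionRing.liftAlgebra A L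
  have : IsScalarTower A M L := FractionRing.isScalarTower_liftAlgebra A L
  have hRL : Function.Injective (algebraMap R L) := by
    rw [IsScalarTower.algebraMap_eq R E L]
    exact (algebraMap E L).injective.comp (IsFractionRing.injective R E)
  have hRA : Function.Injective (algebraMap R A) := by
    rw [IsScalarTower.algebraMap_eq R A L, RingHom.coe_comp] at hRL
    exact Function.Injective.of_comp hRL
  have : IsDomain R := hRA.isDomain
  have hRM : Function.Injective ((algebraMap A M).comp (algebraMap R A)) :=
    (IsFractionRing.injective A M).comp hRA
  let : Algebra E M := (IsFractionRing.lift (K := E) hRM).toAlgebra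
  have : IsScalarTower E M L := .of_algebraMap_eq' <| by
    refine IsLocalization.ringHom_ext (nonZeroDivisors R) ?_
    ext x
    change algebraMap E L (algebraMap R E x) =
      algebraMap M L (IsFractionRing.lift (K := E) hRM (algebraMap R E x))
    rw [IsFractionRing.lift_algebraMap, RingHom.comp_apply, ← IsScalarTower.algebraMap_apply,
      ← IsScalarTower.algebraMap_apply, ← IsScalarTower.algebraMap_apply]
  have : FiniteDimensional M L := FiniteDimensional.right E M L
  have : IsGalois M L := IsGalois.tower_top_of_isGalois E M L
  have : Algebra.IsIntegral R B := IsIntegralClosure.isIntegral_algebra R L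
  have : Algebra.IsIntegral R A := ⟨fun x =>
    (isIntegral_algebraMap_iff (A := A) (B := B) Subtype.val_injective).1
      (Algebra.IsIntegral.isIntegral (R := R) (x : B))⟩
  have : IsIntegralClosure B A L := ⟨hBL, fun {x} =>
    ⟨fun hx => IsIntegralClosure.isIntegral_iff.1 (isIntegral_trans (R := R) x hx),
      fun hx => (IsIntegralClosure.isIntegral_iff (R := R).2 hx).tower_top⟩⟩
  obtain ⟨σ, hσ⟩ := exists_galois_conj (K := K) (A := A) (M := M) (L := L) (B := B) χ χ'
    fun a => h a a.2
  refine ⟨σ.restrictScalars E, fun a ha => ?_, hσ⟩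
  change σ (algebraMap A L ⟨a, ha⟩) = algebraMap A L ⟨a, ha⟩
  rw [IsScalarTower.algebraMap_apply A M L, AlgEquiv.commutes]

/-- `R → B` is injective as soon as it factors the inclusion `R ⊆ E ⊆ L`. -/
theorem injective_algebraMap_of_integralClosure (R E L B : Type*) [CommRing R] [Field E] [Field L]
    [CommRing B] [Algebra R E] [IsFractionRing R E] [Algebra E L] [Algebra R L]
    [IsScalarTower R E L] [Algebra R B] [Algebra B L] [IsScalarTower R B L] :
    Function.Injective (algebraMap R B) := by
  have : Function.Injective (algebraMap R L) := by
    rw [IsScalarTower.algebraMap_eq _ E L]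
    exact (algebraMap E L).injective.comp (IsFractionRing.injective _ E)
  rw [IsScalarTower.algebraMap_eq _ B L, RingHom.coe_comp] at this
  exact Function.Injective.of_comp this

theorem exists_root_of_apply {R E L B ι : Type*} [CommRing R] [Field E] [Field L] [CommRing B]
    [Algebra R E] [Algebra E L] [Algebra R L] [IsScalarTower R E L] [Algebra R B] [Algebra B L]
    [IsScalarTower R B L] [Fintype ι] {p : R[X]} {t : ι → B}
    (ht : p.map (algebraMap R B) = ∏ k, (X - C (t k))) (σ : L ≃ₐ[E] L) (k : ι) :
    ∃ m, σ (algebraMap B L (t k)) = algebraMap B L (t m) := by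
  have hL : p.map (algebraMap R L) = ∏ k, (X - C (algebraMap B L (t k))) := by
    rw [IsScalarTower.algebraMap_eq R B L, ← Polynomial.map_map, ht, Polynomial.map_prod]
    simp
  have h0 : aeval (algebraMap B L (t k)) p = 0 := by
    rw [← eval_map_algebraMap, hL, eval_prod]
    exact Finset.prod_eq_zero (Finset.mem_univ k) (by simp)
  have h1 : aeval (σ (algebraMap B L (t k))) p = 0 := by
    have := aeval_algHom_apply (σ.restrictScalars R : L →ₐ[R] L) (algebraMap B L (t k)) p
    rw [h0, map_zero] at this
    exact this
  rw [← eval_map_algebraMap, hL, eval_prod, Finset.prod_eq_zero_iff] at h1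
  obtain ⟨m, -, hm⟩ := h1
  exact ⟨m, by simpa [sub_eq_zero] using hm⟩

/-! ### The roots of a single translate -/

section
variable {K : Type*} [Field K] {n : ℕ} {α : K[X]} {B : Type*} [CommRing B] [Algebra K B]
  [Algebra (MvPolynomial (Fin n) K) B] [IsScalarTower K (MvPolynomial (Fin n) K) B]
  {t : Fin n → B}

/-- The map `ψ` writing each `U_k` as a polynomial in `n` independent variables standing for the
roots of `𝓕 + α`; substituting the actual roots `t` recovers `U_k`. -/
theorem exists_coeff_hom (hα : α.degree < n)
    (ht : (shifted n α).map (algebraMap _ B) = ∏ k, (X - C (t k))) :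
    ∃ ψ : MvPolynomial (Fin n) K →ₐ[K] MvPolynomial (Fin n) K,
      (shifted n α).map (ψ : MvPolynomial (Fin n) K →+* MvPolynomial (Fin n) K) =
        ∏ k, (X - C (MvPolynomial.X k)) ∧
      ∀ x, MvPolynomial.aeval t (ψ x) = algebraMap (MvPolynomial (Fin n) K) B x := by
  obtain ⟨ψ, hψ⟩ := exists_hom_of_monic (S := MvPolynomial (Fin n) K) hα
    (p := ∏ k, (X - C (MvPolynomial.X k))) (monic_prod_of_monic _ _ fun k _ => monic_X_sub_C _)
    (by rw [natDegree_prod_of_monic _ _ fun k _ => monic_X_sub_C _]; simp)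
  refine ⟨ψ, hψ, fun x => ?_⟩
  have := hom_ext_of_shifted α ((MvPolynomial.aeval t).comp ψ)
    (IsScalarTower.toAlgHom K (MvPolynomial (Fin n) K) B) (by
      change _ = (shifted n α).map (algebraMap _ B)
      rw [ht, AlgHom.comp_toRingHom, ← Polynomial.map_map, hψ, Polynomial.map_prod]
      simp)
  exact DFunLike.congr_fun this x

/-- The roots of `𝓕 + α` are algebraically independent over `K`. -/
theorem injective_aeval_roots [IsDomain B] (hα : α.degree < n)
    (hinj : Function.Injective (algebraMap (MvPolynomial (Fin n) K) B))
    (ht : (shifted n α).map (algebraMap _ B) = ∏ k, (X - C (t k))) :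
    Function.Injective (MvPolynomial.aeval t : MvPolynomial (Fin n) K →ₐ[K] B) := by
  obtain ⟨ψ, hψ, hcomp⟩ := exists_coeff_hom hα ht
  have hint : (ψ : MvPolynomial (Fin n) K →+* MvPolynomial (Fin n) K).IsIntegral := by
    intro x
    induction x using MvPolynomial.induction_on with
    | C a =>
      rw [← MvPolynomial.algebraMap_eq, ← ψ.commutes]
      exact RingHom.isIntegralElem_map _
    | add p q hp hq => exact hp.add _ hq
    | mul_X p k hp =>
      refine hp.mul _ ⟨shifted n α, monic_shifted hα, ?_⟩
      rw [eval₂_eq_eval_map, hψ, eval_prod]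
      exact Finset.prod_eq_zero (Finset.mem_univ k) (by simp)
  rw [← AlgHom.coe_toRingHom, RingHom.injective_iff_ker_eq_bot]
  -- the kernel is an ideal of an integral extension which meets the base ring trivially
  let := (ψ : MvPolynomial (Fin n) K →+* MvPolynomial (Fin n) K).toAlgebra
  refine @Ideal.eq_bot_of_comap_eq_bot (MvPolynomial (Fin n) K) _ (MvPolynomial (Fin n) K) _
    _ this _ _ ⟨hint⟩ ?_
  rw [eq_bot_iff]
  intro x hx
  have hx : MvPolynomial.aeval t (ψ x) = 0 := hx
  rw [hcomp] at hx
  exact hinj (by simpa using hx)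

/-- The roots of `𝓕 + α` can be specialized to arbitrary elements of `K`. -/
theorem exists_point [IsAlgClosed K] (hα : α.degree < n)
    [IsDomain B] [Algebra.IsIntegral (MvPolynomial (Fin n) K) B]
    (hinj : Function.Injective (algebraMap (MvPolynomial (Fin n) K) B))
    (ht : (shifted n α).map (algebraMap _ B) = ∏ k, (X - C (t k))) (c : Fin n → K) :
    ∃ χ : B →ₐ[K] K, ∀ k, χ (t k) = c k := by
  have hφ := injective_aeval_roots hα hinj ht
  obtain ⟨ψ, hψ, hcomp⟩ := exists_coeff_hom hα ht
  let e := AlgEquiv.ofInjective (MvPolynomial.aeval t : MvPolynomial (Fin n) K →ₐ[K] B) hφ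
  let A := (MvPolynomial.aeval t : MvPolynomial (Fin n) K →ₐ[K] B).range
  have hmem : ∀ x, algebraMap (MvPolynomial (Fin n) K) B x ∈ A := fun x => ⟨ψ x, hcomp x⟩
  have : Algebra.IsIntegral A B := ⟨fun b => by
    obtain ⟨p, hp, hpb⟩ := Algebra.IsIntegral.isIntegral (R := MvPolynomial (Fin n) K) b
    refine ⟨p.map ((algebraMap _ B).codRestrict A.toSubring hmem), hp.map _, ?_⟩
    rw [eval₂_map]
    exact hpb⟩
  obtain ⟨χ, hχ⟩ := exists_point_over (A := A) (B := B) Subtype.val_injective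
    ((MvPolynomial.aeval c : MvPolynomial (Fin n) K →ₐ[K] K).comp (e.symm : A →ₐ[K] _))
  refine ⟨χ, fun k => ?_⟩
  have hk : algebraMap A B (e (MvPolynomial.X k)) = t k := by simp [e]
  rw [← hk, hχ]
  simp

variable {E L : Type*} [Field E] [Field L] [Algebra (MvPolynomial (Fin n) K) E]
  [IsFractionRing (MvPolynomial (Fin n) K) E] [Algebra E L] [Algebra (MvPolynomial (Fin n) K) L]
  [IsScalarTower (MvPolynomial (Fin n) K) E L] [FiniteDimensional E L] [IsGalois E L] [Algebra B L]
  [IsScalarTower (MvPolynomial (Fin n) K) B L] [IsIntegralClosure B (MvPolynomial (Fin n) K) L]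
  [IsFractionRing B L]

variable (E L) in
/-- The Galois group of `𝓕 + α` is the full symmetric group. Specialize the roots to distinct
constants `c`, and also to `c ∘ π`: both points lie over the same coefficients, so they are
conjugate, and the conjugating automorphism has to permute the roots by `π`. -/
theorem exists_perm_roots [IsAlgClosed K] (hα : α.degree < n)
    (ht : (shifted n α).map (algebraMap _ B) = ∏ k, (X - C (t k))) (π : Equiv.Perm (Fin n)) :
    ∃ σ : L ≃ₐ[E] L, ∀ k, σ (algebraMap B L (t k)) = algebraMap B L (t (π k)) := by
  have hBL : Function.Injective (algebraMap B L) :=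
    IsIntegralClosure.algebraMap_injective B (MvPolynomial (Fin n) K) L
  have : IsDomain B := hBL.isDomain
  have hinj := injective_algebraMap_of_integralClosure (MvPolynomial (Fin n) K) E L B
  have : Algebra.IsIntegral (MvPolynomial (Fin n) K) B := IsIntegralClosure.isIntegral_algebra _ L
  have : Infinite K := IsAlgClosed.instInfinite
  obtain ⟨c, hc⟩ : ∃ c : Fin n → K, Function.Injective c :=
    ⟨_, (Fin.valEmbedding.trans (Infinite.natEmbedding K)).injective⟩
  obtain ⟨χ, hχ⟩ := exists_point hα hinj ht c
  obtain ⟨χ', hχ'⟩ := exists_point hα hinj ht (c ∘ π)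
  have hR : χ.comp (IsScalarTower.toAlgHom K (MvPolynomial (Fin n) K) B) =
      χ'.comp (IsScalarTower.toAlgHom K (MvPolynomial (Fin n) K) B) := by
    have key : ∀ χ : B →ₐ[K] K, (shifted n α).map
        (χ.comp (IsScalarTower.toAlgHom K (MvPolynomial (Fin n) K) B) :
          MvPolynomial (Fin n) K →+* K) = ∏ k, (X - C (χ (t k))) := by
      intro χ
      rw [AlgHom.comp_toRingHom, ← Polynomial.map_map]
      change ((shifted n α).map (algebraMap _ B)).map _ = _
      rw [ht, Polynomial.map_prod]
      simp
    refine hom_ext_of_shifted α _ _ ?_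
    rw [key, key]
    simp only [hχ, hχ', Function.comp_apply]
    exact (Equiv.prod_comp π fun k => X - C (c k)).symm
  obtain ⟨σ, hσ⟩ := exists_galois_conj (K := K) (A := MvPolynomial (Fin n) K) (M := E) (L := L)
    (B := B) χ χ' fun a => DFunLike.congr_fun hR a
  refine ⟨σ, fun k => ?_⟩
  obtain ⟨m, hm⟩ := exists_root_of_apply ht σ k
  rw [hm]
  have := hσ _ _ hm.symm
  rw [hχ, hχ'] at this
  rw [hc this]

/-- Inertia: if `π` only permutes roots of `𝓕 + α` having the same value at the point `χ`, then `π`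
is induced by an automorphism `σ` with `χ ∘ σ = χ`. Starting from any `σ₀` inducing `π`, the points
`χ ∘ σ₀` and `χ` agree on `K[t]`, hence are conjugate by an automorphism fixing all the `t k`. -/
theorem exists_perm_roots_fixing_point [IsAlgClosed K] (hα : α.degree < n)
    (ht : (shifted n α).map (algebraMap _ B) = ∏ k, (X - C (t k))) (π : Equiv.Perm (Fin n))
    (χ : B →ₐ[K] K) (hχ : ∀ k, χ (t (π k)) = χ (t k)) :
    ∃ σ : L ≃ₐ[E] L, (∀ k, σ (algebraMap B L (t k)) = algebraMap B L (t (π k))) ∧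
      ∀ b b' : B, algebraMap B L b' = σ (algebraMap B L b) → χ b' = χ b := by
  have hBL : Function.Injective (algebraMap B L) :=
    IsIntegralClosure.algebraMap_injective B (MvPolynomial (Fin n) K) L
  have : IsDomain B := hBL.isDomain
  have hinj := injective_algebraMap_of_integralClosure (MvPolynomial (Fin n) K) E L B
  obtain ⟨ψ, hψ, hcomp⟩ := exists_coeff_hom hα ht
  have hφ := injective_aeval_roots hα hinj ht
  let A := (MvPolynomial.aeval t : MvPolynomial (Fin n) K →ₐ[K] B).range
  have : IsIntegrallyClosed A :=
    IsIntegrallyClosed.of_equiv (AlgEquiv.ofInjective _ hφ).toRingEquiv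
  obtain ⟨σ₀, hσ₀⟩ := exists_perm_roots E L hα ht π
  let s₀ := galRestrict (MvPolynomial (Fin n) K) E L B σ₀
  have hs₀ : ∀ b, algebraMap B L (s₀ b) = σ₀ (algebraMap B L b) :=
    algebraMap_galRestrict_apply (MvPolynomial (Fin n) K) σ₀
  let χ' : B →ₐ[K] K := χ.comp (s₀.restrictScalars K : B →ₐ[K] B)
  have hχ' : ∀ b, χ' b = χ (s₀ b) := fun _ => rfl
  have hroots : ∀ k, s₀ (t k) = t (π k) := fun k => hBL (by rw [hs₀, hσ₀])
  have hagree : χ'.comp (MvPolynomial.aeval t : MvPolynomial (Fin n) K →ₐ[K] B) =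
      χ.comp (MvPolynomial.aeval t) := by
    refine MvPolynomial.algHom_ext fun k => ?_
    simp [hχ', hroots, hχ]
  obtain ⟨h, hfix, hh⟩ := exists_galois_conj_fixing (E := E) (L := L) A
    (fun x => ⟨ψ x, hcomp x⟩) χ' χ
    (by rintro _ ⟨p, rfl⟩; exact DFunLike.congr_fun hagree p)
  refine ⟨h.trans σ₀, fun k => ?_, fun b b' hb => ?_⟩
  · rw [AlgEquiv.trans_apply, hfix (t k) ⟨MvPolynomial.X k, by simp⟩, hσ₀]
  · have h1 := algebraMap_galRestrict_apply (MvPolynomial (Fin n) K) (B := B) h b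
    rw [← hh b _ h1, hχ']
    congr 1
    apply hBL
    rw [hb, hs₀, h1, AlgEquiv.trans_apply]
end

/-! ### Specializations with a root of multiplicity `n - 1` -/

/-- For `e = n - 1` the roots of this polynomial include every multiple root of
`(x - c)^(n-1) (x - d) + a`, whatever `d` is; it is nonzero because its leading term is `x^n`. -/
theorem resolvent_ne_zero {K : Type*} [Field K] {n : ℕ} {a : K[X]} (ha : a ≠ 0)
    (hdeg : a.degree < n) (c e : K) :
    (X - C c) ^ n + ((X - C c) * derivative a - C e * a) ≠ 0 := by
  refine ((monic_X_sub_C c).pow n |>.add_of_left ?_).ne_zero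
  rw [degree_pow, degree_X_sub_C, nsmul_one]
  refine (degree_sub_le _ _).trans_lt (max_lt ?_ ?_)
  · by_cases h0 : derivative a = 0
    · rw [h0, mul_zero, degree_zero]
      exact WithBot.bot_lt_coe n
    · have h1 := degree_derivative_lt ha
      rw [degree_mul, degree_X_sub_C]
      rw [degree_eq_natDegree ha, degree_eq_natDegree h0] at *
      have h1 : (derivative a).natDegree < a.natDegree := by exact_mod_cast h1
      have h2 : a.natDegree < n := by exact_mod_cast hdeg
      have h3 : 1 + (derivative a).natDegree < n := by omega
      exact_mod_cast h3
  · rw [← smul_eq_C_mul]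
    exact (degree_smul_le _ _).trans_lt hdeg

/-- For suitable `c` and `d`, adding any of finitely many given nonzero polynomials of degree `< n` to
`(x - c)^(n-1) (x - d)` destroys all multiple roots. Take `c` with every `a j` nonzero at `c`. A
multiple root `x` is then different from `c` and, eliminating `d`, is among the finitely many
roots of the polynomial of `resolvent_ne_zero`; as `x` determines `d`, finitely many `d` are bad. -/
theorem exists_separating_point {K ι : Type*} [Field K] [Infinite K] {n : ℕ} (hn : 2 ≤ n)
    (s : Finset ι) (a : ι → K[X]) (hdeg : ∀ j ∈ s, (a j).degree < n) (hne : ∀ j ∈ s, a j ≠ 0) :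
    ∃ c d : K, ∀ j ∈ s, ∀ x : K, ¬ (X - C x) ^ 2 ∣ (X - C c) ^ (n - 1) * (X - C d) + a j := by
  obtain ⟨m, rfl⟩ : ∃ m, n = m + 2 := ⟨n - 2, by omega⟩
  obtain ⟨c, hc⟩ := Infinite.exists_notMem_finset (s.biUnion fun j => (a j).roots.toFinset)
  have hc : ∀ j ∈ s, (a j).eval c ≠ 0 := by
    intro j hj h0
    exact hc (Finset.mem_biUnion.2 ⟨j, hj, by simp [hne j hj, h0]⟩)
  let Q : ι → K[X] := fun j =>
    (X - C c) ^ (m + 2) + ((X - C c) * derivative (a j) - C ((m + 1 : ℕ) : K) * a j)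
  obtain ⟨d, hd⟩ := Infinite.exists_notMem_finset (s.biUnion fun j =>
    (Q j).roots.toFinset.image fun x => x + (a j).eval x / (x - c) ^ (m + 1))
  refine ⟨c, d, fun j hj x hx => ?_⟩
  rw [show m + 2 - 1 = m + 1 by omega] at hx
  obtain ⟨q, hq⟩ := hx
  have h0 : (x - c) ^ (m + 1) * (x - d) + (a j).eval x = 0 := by
    have := congrArg (eval x) hq
    simpa using this
  have h1 : ((m : K) + 1) * (x - c) ^ m * (x - d) + (x - c) ^ (m + 1)
      + (derivative (a j)).eval x = 0 := by
    have := congrArg (fun p => eval x (derivative p)) hq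
    simpa [derivative_mul, derivative_pow] using this
  have hxc : x - c ≠ 0 := by
    intro h
    have hxc : x = c := sub_eq_zero.1 h
    subst hxc
    exact hc j hj (by simpa using h0)
  refine hd (Finset.mem_biUnion.2 ⟨j, hj, Finset.mem_image.2 ⟨x, ?_, ?_⟩⟩)
  · rw [Multiset.mem_toFinset, mem_roots (resolvent_ne_zero (hne j hj) (hdeg j hj) c _)]
    simp only [IsRoot.def, eval_add, eval_sub, eval_mul, eval_pow, eval_X, eval_C]
    push_cast
    linear_combination (x - c) * h1 - ((m : K) + 1) * h0
  · have hp : (x - c) ^ (m + 1) ≠ 0 := pow_ne_zero _ hxc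
    field_simp
    linear_combination h0

theorem injective_of_no_square {K : Type*} [Field K] {ι : Type*} [Fintype ι] (u : ι → K)
    (h : ∀ x : K, ¬ (X - C x) ^ 2 ∣ ∏ k, (X - C (u k))) : Function.Injective u := by
  intro k m hkm
  by_contra hne
  refine h (u k) ?_
  rw [← Finset.mul_prod_erase _ _ (Finset.mem_univ k), ← Finset.mul_prod_erase _ _
    (Finset.mem_erase.2 ⟨Ne.symm hne, Finset.mem_univ m⟩), ← hkm, ← mul_assoc, ← sq]
  exact dvd_mul_right _ _

/-! ### The Galois group of the product -/

theorem exists_eq_prod_X_sub_C {L : Type*} [Field L] {p : L[X]} (hp : p.Monic) (hs : p.Splits)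
    {n : ℕ} (hn : p.natDegree = n) : ∃ u : Fin n → L, p = ∏ k, (X - C (u k)) := by
  have hcard : p.roots.toList.length = n := by
    rw [Multiset.length_toList, ← hs.natDegree_eq_card_roots, hn]
  subst hcard
  refine ⟨p.roots.toList.get, ?_⟩
  conv_lhs => rw [hs.eq_prod_roots_of_monic hp, ← Multiset.coe_toList p.roots]
  rw [Multiset.map_coe, Multiset.prod_coe, ← List.prod_ofFn]
  congr 1
  conv_lhs => rw [← List.ofFn_get p.roots.toList]
  rw [List.map_ofFn]
  rfl

theorem exists_integral_roots {R B L : Type*} [CommRing R] [CommRing B] [Field L] [Algebra R B]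
    [Algebra B L] [Algebra R L] [IsScalarTower R B L] [IsIntegralClosure B R L] {p : R[X]}
    (hp : p.Monic) (hs : (p.map (algebraMap R L)).Splits) {n : ℕ} (hn : p.natDegree = n) :
    ∃ t : Fin n → B, p.map (algebraMap R B) = ∏ k, (X - C (t k)) := by
  obtain ⟨u, hu⟩ := exists_eq_prod_X_sub_C (hp.map _) hs ((hp.natDegree_map _).trans hn)
  have hint : ∀ k, ∃ b : B, algebraMap B L b = u k := fun k => by
    refine IsIntegralClosure.isIntegral_iff.1 ⟨p, hp, ?_⟩
    rw [eval₂_eq_eval_map, hu, eval_prod]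
    exact Finset.prod_eq_zero (Finset.mem_univ k) (by simp)
  choose t ht using hint
  refine ⟨t, map_injective _ (IsIntegralClosure.algebraMap_injective B R L) ?_⟩
  rw [Polynomial.map_map, ← IsScalarTower.algebraMap_eq, hu, Polynomial.map_prod]
  simp [ht]

/-- A group action stabilizing each of the families `t i` gives a homomorphism to the product of the
permutation groups of the indices. -/
theorem exists_perm_hom {G L ι κ : Type*} [Group G] [Finite κ] [MulAction G L]
    (t : ι → κ → L) (ht : ∀ i, Function.Injective (t i))
    (hstab : ∀ (g : G) i k, ∃ m, g • t i k = t i m) :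
    ∃ Φ : G →* (ι → Equiv.Perm κ), ∀ g i k, g • t i k = t i (Φ g i k) := by
  choose p hp using hstab
  have hinj : ∀ g i, Function.Injective (p g i) := fun g i k m hkm => by
    apply ht i
    apply MulAction.injective g
    change g • t i k = g • t i m
    rw [hp, hp, hkm]
  refine ⟨MonoidHom.mk' (fun g i => Equiv.ofBijective (p g i)
    (Finite.injective_iff_bijective.1 (hinj g i))) ?_, hp⟩
  intro g h
  ext i k
  apply ht i
  change t i (p (g * h) i k) = t i (p g i (p h i k))
  rw [← hp, ← hp, ← hp, mul_smul]

theorem surjective_of_swaps {G ι κ : Type*} [Group G] [Finite ι] [DecidableEq ι] [Finite κ]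
    [DecidableEq κ] (Φ : G →* (ι → Equiv.Perm κ))
    (h : ∀ (i : ι) (a b : κ), a ≠ b → ∃ g, Φ g = Pi.mulSingle i (Equiv.swap a b)) :
    Function.Surjective Φ := by
  rw [← MonoidHom.range_eq_top, eq_top_iff]
  intro x _
  refine Subgroup.pi_mem_of_mulSingle_mem x fun i => ?_
  have htop : Φ.range.comap (MonoidHom.mulSingle (fun _ : ι => Equiv.Perm κ) i) = ⊤ := by
    rw [eq_top_iff, ← Equiv.Perm.closure_isSwap, Subgroup.closure_le]
    rintro _ ⟨a, b, hab, rfl⟩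
    obtain ⟨g, hg⟩ := h i a b hab
    exact ⟨g, hg⟩
  have : x i ∈ Φ.range.comap (MonoidHom.mulSingle (fun _ : ι => Equiv.Perm κ) i) := by
    rw [htop]; trivial
  exact this

/-- The theorem over an arbitrary algebraically closed field `K` of any characteristic, for any
splitting field `L`. -/
theorem galois_mulEquiv {K : Type*} [Field K] [IsAlgClosed K] {n r : ℕ} (hn : 2 < n)
    (α : Fin r → K[X]) (hα : ∀ i, (α i).degree < n) (hinj : Function.Injective α)
    {E L : Type*} [Field E] [Algebra (MvPolynomial (Fin n) K) E]
    [IsFractionRing (MvPolynomial (Fin n) K) E] [Field L] [Algebra E L]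
    (hL : IsSplittingField E L (∏ i, (shifted n (α i)).map (algebraMap _ E))) :
    Nonempty ((L ≃ₐ[E] L) ≃* (Fin r → Equiv.Perm (Fin n))) := by
  let R := MvPolynomial (Fin n) K
  let : Algebra R L := ((algebraMap E L).comp (algebraMap R E)).toAlgebra
  have : IsScalarTower R E L := .of_algebraMap_eq fun _ => rfl
  let : Algebra K L := ((algebraMap R L).comp (algebraMap K R)).toAlgebra
  have : IsScalarTower K R L := .of_algebraMap_eq fun _ => rfl
  have : FiniteDimensional E L := IsSplittingField.finiteDimensional L
    (∏ i, (shifted n (α i)).map (algebraMap R E))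
  let B := integralClosure R L
  have : IsFractionRing B L := integralClosure.isFractionRing_of_finite_extension E L
  have hRB := injective_algebraMap_of_integralClosure R E L B
  have hBL : Function.Injective (algebraMap B L) := Subtype.val_injective
  have hmonic := fun i => monic_shifted (hα i)
  have hprod : (∏ i, (shifted n (α i)).map (algebraMap R E)) ≠ 0 :=
    (monic_prod_of_monic _ _ fun i _ => (hmonic i).map _).ne_zero
  have hsplit : ∀ i, ((shifted n (α i)).map (algebraMap R L)).Splits := fun i => by
    refine Splits.of_dvd hL.splits' (Polynomial.map_ne_zero hprod) ?_
    rw [Polynomial.map_prod, IsScalarTower.algebraMap_eq R E L, ← Polynomial.map_map]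
    exact Finset.dvd_prod_of_mem _ (Finset.mem_univ i)
  have hroots := fun i => exists_integral_roots (B := B) (hmonic i) (hsplit i)
    (natDegree_shifted (hα i))
  choose t ht using hroots
  have htinj : ∀ i, Function.Injective (t i) := fun i => by
    have h := (injective_aeval_roots (hα i) hRB (ht i)).comp (MvPolynomial.X_injective)
    convert h using 1
    ext k
    simp
  have htL : ∀ i, (shifted n (α i)).map (algebraMap R L) =
      ∏ k, (X - C (algebraMap B L (t i k))) := fun i => by
    rw [IsScalarTower.algebraMap_eq R B L, ← Polynomial.map_map, ht, Polynomial.map_prod]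
    simp
  -- every element of the set of roots generating `L` is some `t i k`
  have hrootSet : ∀ x ∈ (∏ i, (shifted n (α i)).map (algebraMap R E)).rootSet L,
      ∃ i k, x = algebraMap B L (t i k) := by
    intro x hx
    have h0 := aeval_eq_zero_of_mem_rootSet hx
    rw [map_prod, Finset.prod_eq_zero_iff] at h0
    obtain ⟨i, -, hi⟩ := h0
    rw [aeval_map_algebraMap, ← eval_map_algebraMap, htL, eval_prod, Finset.prod_eq_zero_iff] at hi
    obtain ⟨k, -, hk⟩ := hi
    exact ⟨i, k, by simpa [sub_eq_zero] using hk⟩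
  have : Algebra.IsSeparable E L := by
    have htop : IntermediateField.adjoin E
        ((∏ i, (shifted n (α i)).map (algebraMap R E)).rootSet L) = ⊤ :=
      (isSplittingField_iff_intermediateField.mp hL).2
    rw [← IntermediateField.isSeparable_top, ← htop,
      IntermediateField.isSeparable_adjoin_iff_isSeparable]
    intro x hx
    obtain ⟨i, k, rfl⟩ := hrootSet x hx
    have hsep : ((shifted n (α i)).map (algebraMap R E)).Separable := by
      rw [← separable_map (algebraMap E L), Polynomial.map_map, ← IsScalarTower.algebraMap_eq, htL,
        separable_prod_X_sub_C_iff]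
      exact hBL.comp (htinj i)
    refine hsep.of_dvd (minpoly.dvd _ _ ?_)
    rw [aeval_map_algebraMap, ← eval_map_algebraMap, htL, eval_prod]
    exact Finset.prod_eq_zero (Finset.mem_univ k) (by simp)
  have : Normal E L := Normal.of_isSplittingField (hFEp := hL) _
  have : IsGalois E L := ⟨⟩
  obtain ⟨Φ, hΦ⟩ := exists_perm_hom (G := L ≃ₐ[E] L) (fun i k => algebraMap B L (t i k))
    (fun i => hBL.comp (htinj i)) fun σ i k => exists_root_of_apply (ht i) σ k
  refine ⟨MulEquiv.ofBijective Φ ⟨?_, ?_⟩⟩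
  · rw [injective_iff_map_eq_one]
    intro σ hσ
    have hfix : ∀ i k, σ (algebraMap B L (t i k)) = algebraMap B L (t i k) := fun i k => by
      simpa [hσ] using hΦ σ i k
    have : (σ : L →ₐ[E] L) = AlgHom.id E L := by
      refine AlgHom.ext_of_adjoin_eq_top hL.adjoin_rootSet' ?_
      intro x hx
      obtain ⟨i, k, rfl⟩ := hrootSet x hx
      exact hfix i k
    ext x
    exact DFunLike.congr_fun this x
  · refine surjective_of_swaps Φ fun i a b hab => ?_
    have : Infinite K := IsAlgClosed.instInfinite
    obtain ⟨c, d, hcd⟩ := exists_separating_point (K := K) hn.le (Finset.univ.erase i)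
      (fun j => α j - α i) (fun j _ => (degree_sub_le _ _).trans_lt (max_lt (hα j) (hα i)))
      fun j hj => sub_ne_zero.2 fun h => Finset.ne_of_mem_erase hj (hinj h)
    obtain ⟨e, hea, heb⟩ : ∃ e : Fin n, e ≠ a ∧ e ≠ b := by
      have := Finset.exists_mem_notMem_of_card_lt_card (s := {a, b})
        (t := (Finset.univ : Finset (Fin n))) (Finset.card_le_two.trans_lt (by simpa using hn))
      simpa using this
    -- the roots other than that of index `e` collide at `χ`, among them those of index `a` and `b`
    obtain ⟨χ, hχ⟩ := exists_point (hα i) hRB (ht i) fun k => if k = e then d else c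
    obtain ⟨σ, hσ, hσχ⟩ := exists_perm_roots_fixing_point (E := E) (L := L) (hα i) (ht i)
      (Equiv.swap a b) χ fun k => by
        rw [hχ, hχ]
        have : Equiv.swap a b k = e ↔ k = e := by
          rw [Equiv.swap_apply_eq_iff, Equiv.swap_apply_of_ne_of_ne hea heb]
        simp [this]
    refine ⟨σ, ?_⟩
    have hval : ∀ j, ∏ k, (X - C (χ (t j k))) =
        (X - C c) ^ (n - 1) * (X - C d) + (α j - α i) := by
      have hmap : ∀ j, (shifted n (α j)).map (χ.comp (IsScalarTower.toAlgHom K R B) : R →+* K) =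
          ∏ k, (X - C (χ (t j k))) := fun j => by
        rw [AlgHom.comp_toRingHom, ← Polynomial.map_map]
        change ((shifted n (α j)).map (algebraMap R B)).map _ = _
        rw [ht, Polynomial.map_prod]
        simp
      have hi : ∏ k, (X - C (χ (t i k))) = (X - C c) ^ (n - 1) * (X - C d) := by
        rw [← Finset.prod_erase_mul _ _ (Finset.mem_univ e), hχ, if_pos rfl]
        congr 1
        rw [Finset.prod_congr rfl (g := fun _ => X - C c)
          fun k hk => by rw [hχ, if_neg (Finset.ne_of_mem_erase hk)]]
        simp
      intro j
      rw [← hi, ← hmap, ← hmap, map_shifted, map_shifted]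
      simp
    funext j
    ext1 k
    apply htinj j
    apply hBL
    rw [← hΦ]
    by_cases hj : j = i
    · subst hj
      rw [Pi.mulSingle_eq_same]
      exact hσ k
    · rw [Pi.mulSingle_eq_of_ne hj]
      obtain ⟨m, hm⟩ := exists_root_of_apply (ht j) σ k
      -- `χ` separates the roots of `𝓕 + α j` and `χ ∘ σ = χ`, so `σ` fixes each of these roots
      have hsep : Function.Injective fun k => χ (t j k) := by
        refine injective_of_no_square _ ?_
        rw [hval]
        exact hcd j (Finset.mem_erase.2 ⟨hj, Finset.mem_univ j⟩)
      have : m = k := hsep (hσχ _ _ hm.symm)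
      rw [this] at hm
      exact hm

end GenericGalois

theorem galois_group_is_product_of_symmetric_groups
    (Fq : Type*) [Field Fq] [Fintype Fq] (hq2 : Even (Fintype.card Fq))
    (n r : ℕ) (hn : 2 < n) (hr : 1 ≤ r)
    (α : Fin r → Polynomial Fq) (hαdeg : ∀ j, (α j).degree < n)
    (hαdist : Function.Injective α) :
    -- `E = 𝔽̄_q(U₀, …, U_{n-1})`
    let K := AlgebraicClosure Fq
    let R := MvPolynomial (Fin n) K
    let E := FractionRing R
    let lift : Fq →+* E := (algebraMap R E).comp
      ((MvPolynomial.C : K →+* R).comp (algebraMap Fq K))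
    -- `𝓕 = x^n + U_{n-1}x^{n-1} + ⋯ + U₁ x + U₀`
    let F : Polynomial E := X ^ n +
      ∑ i : Fin n, C (algebraMap R E (MvPolynomial.X i)) * X ^ (i : ℕ)
    -- the splitting field of `∏ᵢ (𝓕 + αᵢ)` over `E`
    let L := (∏ i : Fin r, (F + (α i).map lift)).SplittingField
    Nonempty ((L ≃ₐ[E] L) ≃* (Fin r → Equiv.Perm (Fin n))) := by
  intro K R E lift F L
  have hpoly : (∏ i, (GenericGalois.shifted n ((α i).map (algebraMap Fq K))).map
      (algebraMap R E)) = ∏ i : Fin r, (F + (α i).map lift) := by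
    refine Finset.prod_congr rfl fun i _ => ?_
    rw [GenericGalois.shifted, GenericGalois.generic, Polynomial.map_add, Polynomial.map_map,
      Polynomial.map_map]
    congr 1
    simp [F, Polynomial.map_sum]
  refine GenericGalois.galois_mulEquiv (E := E) (L := L) hn
    (fun i => (α i).map (algebraMap Fq K)) (fun i => degree_map_le.trans_lt (hαdeg i))
    ((map_injective _ (algebraMap Fq K).injective).comp hαdist) ?_
  rw [hpoly]
  exact IsSplittingField.splittingField _
end

section
/- Let m ≥ 2 and n = 2m, and work in the polynomial ring ℤ[a, b, t]. Define disc(f) = (−1)^{n(n−1)/2}·Res_x(f, ∂f/∂x) for monic f of degree n in x. Then disc(x^n + a·x^{n−1} + b·x + t) ≡ (−1)^{m+1}·(n−1)^{n−1}·(a^n t^{n−2} + b^n) + 2·a^m b^m t^{m−1} + 4·E (mod 8·ℤ[a, b, t]), where E = a^{m+1} b^{m+1} t^{m−2} if m is even and E = a^{m−1} b^{m−1} t^m if m is odd. -/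
/-!
Write `n = 2 * m`, `N = n - 1`. Modulo `f`, the polynomial `x * (x + a) * f'` is congruent to
`-q`, where `q = N * b * x ^ 2 + (n * t + (n - 2) * a * b) * x + N * a * t`. Since
`f(0) = t` and `f(-a) = t - a * b`, multiplicativity of the resultant gives
`t * (t - a * b) * Res(f, f') = (N * b) ^ n * f(β₁) * f(β₂)`, with `β₁, β₂` the roots of `q` in an
algebraic closure of `ℚ(a, b, t)` (`resultant_mul_eq_eval`). Put `γᵢ = N * b * βᵢ` and
`δᵢ = γᵢ + N * a * b`; the symmetric functions of the `γᵢ` and `δᵢ` are polynomials in `a, b, t`,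
and `δ₁ + δ₂`, `δ₁ * δ₂` are divisible by `a * b - t`. As `n` is even, the product `f(β₁) * f(β₂)`
involves the `γᵢ` only through `γ₁ ^ (m - 1) * δ₁ + γ₂ ^ (m - 1) * δ₂ = 2 * (a * b - t) * V`,
where `V` satisfies a linear recurrence over `ℤ[a, b, t]` (`halfSum`). Cancelling
`t * (a * b - t)` yields the exact formula (`resultant_formula`)

`disc f = (-1) ^ (m + 1) * (N ^ N * (a ^ n * t ^ (n - 2) + b ^ n)
  + 4 * (a * b - t) * V ^ 2 - 2 * N ^ N * (a * b) ^ m * t ^ (m - 1))`.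

Modulo `8` only `V` modulo `2` and `N ^ N` modulo `4` matter in the last two terms. The recurrence
for `V` collapses modulo `2` to `V (j + 2) = a * b * t * V j`, so `V` is a monomial modulo `2`,
depending on the parity of `m`, and `N ^ N` is `(-1) ^ (m + 1)` modulo `4`.
-/

open Polynomial

/-- Reversing the order of rows and columns and transposing turns the present Sylvester matrix
into Mathlib's, so the two resultants agree. -/
lemma resultant_eq_polynomial_resultant {R : Type*} [CommRing R] (m n : ℕ) (f g : R[X])
    (hf : f.natDegree ≤ m) (hg : g.natDegree ≤ n) :
    _root_.resultant m n f g = Polynomial.resultant f g m n := by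
  let e : Fin (n + m) ≃ Fin (m + n) := (finCongr (add_comm n m)).trans Fin.revPerm
  have h : _root_.sylvester m n f g = (Polynomial.sylvester f g m n).transpose.submatrix e e := by
    ext i j
    simp only [Matrix.submatrix_apply, Matrix.transpose_apply]
    have hj : ((e j : Fin (m + n)) : ℕ) = m + n - 1 - j := by
      simp [e, Fin.val_rev]; omega
    induction i using Fin.addCases with
    | left i =>
      have hi : e (Fin.castAdd m i) = Fin.natAdd m i.rev := by
        ext; simp [e, Fin.val_rev]; omega
      rw [hi]
      simp only [_root_.sylvester, Polynomial.sylvester, Matrix.of_apply, Fin.addCases_left,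
        Fin.addCases_right, hj, Set.mem_Icc, Fin.val_rev]
      have := i.2
      have := j.2
      by_cases h1 : (j : ℕ) ≤ m + i
      · by_cases h2 : (i : ℕ) ≤ j
        · rw [if_pos h1, if_pos (by omega)]
          congr 1; omega
        · rw [if_pos h1, if_neg (by omega)]
          exact coeff_eq_zero_of_natDegree_lt (by omega)
      · rw [if_neg h1, if_neg (by omega)]
    | right i =>
      have hi : e (Fin.natAdd n i) = Fin.castAdd n i.rev := by
        ext; simp [e, Fin.val_rev]; omega
      rw [hi]
      simp only [_root_.sylvester, Polynomial.sylvester, Matrix.of_apply, Fin.addCases_left,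
        Fin.addCases_right, hj, Set.mem_Icc, Fin.val_rev]
      have := i.2
      have := j.2
      by_cases h1 : (j : ℕ) ≤ n + i
      · by_cases h2 : (i : ℕ) ≤ j
        · rw [if_pos h1, if_pos (by omega)]
          congr 1; omega
        · rw [if_pos h1, if_neg (by omega)]
          exact coeff_eq_zero_of_natDegree_lt (by omega)
      · rw [if_neg h1, if_neg (by omega)]
  rw [_root_.resultant, Polynomial.resultant, h, Matrix.det_submatrix_equiv_self,
    Matrix.det_transpose]

/-- The sequence `V j = (γ₁ ^ j * δ₁ + γ₂ ^ j * δ₂) / (2 * (a * b - t))`, where `γ₁, γ₂` are the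
roots of `X ^ 2 + (2 * M * t + (2 * M - 2) * a * b) * X + (2 * M - 1) ^ 2 * a * b * t` and
`δᵢ = γᵢ + (2 * M - 1) * a * b`. It is defined by its linear recurrence, which shows that it
is a polynomial in `M, a, b, t`. -/
def halfSum {R : Type*} [CommRing R] (M a b t : R) : ℕ → R
  | 0 => M
  | 1 => 2 * M ^ 2 * (a * b - t) - (2 * M - 1) * (M + 1) * (a * b)
  | j + 2 => -(2 * M * t + (2 * M - 2) * (a * b)) * halfSum M a b t (j + 1)
      - (2 * M - 1) ^ 2 * (a * b * t) * halfSum M a b t j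

lemma map_halfSum {R S : Type*} [CommRing R] [CommRing S] (φ : R →+* S) (M a b t : R) (j : ℕ) :
    φ (halfSum M a b t j) = halfSum (φ M) (φ a) (φ b) (φ t) j := by
  induction j using Nat.twoStepInduction with
  | zero => simp [halfSum]
  | one => simp only [halfSum, map_sub, map_mul, map_pow, map_add, map_one, map_ofNat]
  | more j h0 h1 =>
    simp only [halfSum, map_sub, map_mul, map_pow, map_add, map_neg, map_one, map_ofNat, h0, h1]

lemma sum_eq_halfSum {R : Type*} [CommRing R] (M a b t g₁ g₂ : R)
    (hs : g₁ + g₂ = -(2 * M * t + (2 * M - 2) * (a * b)))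
    (hp : g₁ * g₂ = (2 * M - 1) ^ 2 * (a * b * t)) (j : ℕ) :
    g₁ ^ j * (g₁ + (2 * M - 1) * (a * b)) + g₂ ^ j * (g₂ + (2 * M - 1) * (a * b))
      = 2 * (a * b - t) * halfSum M a b t j := by
  induction j using Nat.twoStepInduction with
  | zero => simp only [halfSum]; linear_combination hs
  | one =>
    simp only [halfSum]
    linear_combination (g₁ + g₂ - (2 * M * t + (2 * M - 2) * (a * b))
      + (2 * M - 1) * (a * b)) * hs - 2 * hp
  | more j h0 h1 =>
    simp only [halfSum, ← hs, ← hp]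
    linear_combination (g₁ + g₂) * h1 - g₁ * g₂ * h0

lemma two_dvd_halfSum_even {R : Type*} [CommRing R] (M a b t : R) (j : ℕ) :
    (2 : R) ∣ halfSum M a b t (2 * j) - (a * b * t) ^ j * M := by
  induction j with
  | zero => simp [halfSum]
  | succ j ih =>
    obtain ⟨w, hw⟩ := ih
    rw [show 2 * (j + 1) = 2 * j + 2 by ring, halfSum]
    exact ⟨-(M * t + (M - 1) * (a * b)) * halfSum M a b t (2 * j + 1)
      - (2 * M ^ 2 - 2 * M + 1) * (a * b * t) * halfSum M a b t (2 * j) + a * b * t * w, by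
      linear_combination a * b * t * hw⟩

lemma two_dvd_halfSum_odd {R : Type*} [CommRing R] (M a b t : R) (j : ℕ) :
    (2 : R) ∣ halfSum M a b t (2 * j + 1) - (a * b * t) ^ j * ((M + 1) * (a * b)) := by
  induction j with
  | zero =>
    simp only [halfSum, pow_zero, one_mul]
    exact ⟨M ^ 2 * (a * b - t) - M * (M + 1) * (a * b), by ring⟩
  | succ j ih =>
    obtain ⟨w, hw⟩ := ih
    rw [show 2 * (j + 1) + 1 = 2 * j + 1 + 2 by ring, halfSum]
    exact ⟨-(M * t + (M - 1) * (a * b)) * halfSum M a b t (2 * j + 1 + 1)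
      - (2 * M ^ 2 - 2 * M + 1) * (a * b * t) * halfSum M a b t (2 * j + 1) + a * b * t * w, by
      linear_combination a * b * t * hw⟩

/-- The quadrinomial `x ^ n + a * x ^ (n - 1) + b * x + t` of even degree `n = 2 * k + 2`. -/
noncomputable def quadrinomial {R : Type*} [CommRing R] (k : ℕ) (a b t : R) : R[X] :=
  X ^ (2 * k + 2) + C a * X ^ (2 * k + 1) + C b * X + C t

lemma natDegree_quadrinomial_le {R : Type*} [CommRing R] (k : ℕ) (a b t : R) :
    (quadrinomial k a b t).natDegree ≤ 2 * k + 2 := by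
  unfold quadrinomial; compute_degree

lemma coeff_quadrinomial {R : Type*} [CommRing R] (k : ℕ) (a b t : R) :
    (quadrinomial k a b t).coeff (2 * k + 2) = 1 := by
  simp [quadrinomial]

lemma derivative_quadrinomial {R : Type*} [CommRing R] (k : ℕ) (a b t : R) :
    derivative (quadrinomial k a b t) =
      C (2 * k + 2 : R) * X ^ (2 * k + 1) + C ((2 * k + 1 : R) * a) * X ^ (2 * k) + C b := by
  simp only [quadrinomial, derivative_mul, derivative_X_pow, derivative_C,
    derivative_X, map_add, map_mul, map_one, map_natCast, map_ofNat, Nat.cast_add, Nat.cast_mul,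
    Nat.cast_ofNat, Nat.cast_one, Nat.add_sub_cancel, show 2 * k + 2 - 1 = 2 * k + 1 from rfl]
  ring

lemma natDegree_derivative_quadrinomial_le {R : Type*} [CommRing R] (k : ℕ) (a b t : R) :
    (derivative (quadrinomial k a b t)).natDegree ≤ 2 * k + 1 :=
  (natDegree_derivative_le _).trans (by have := natDegree_quadrinomial_le k a b t; omega)

/-- Multiplicativity of the resultant in the second argument, with the formal degrees as free
bounds; the first argument is monic. -/
lemma resultant_mul_right_of_le {R : Type*} [CommRing R] (f g₁ g₂ : R[X]) (m n₁ n₂ : ℕ)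
    (hm : f.natDegree ≤ m) (h1 : f.coeff m = 1) (hg₁ : g₁.natDegree ≤ n₁)
    (hg₂ : g₂.natDegree ≤ n₂) :
    Polynomial.resultant f (g₁ * g₂) m (n₁ + n₂)
      = Polynomial.resultant f g₁ m n₁ * Polynomial.resultant f g₂ m n₂ := by
  obtain ⟨c, rfl⟩ := Nat.exists_eq_add_of_le hg₁
  obtain ⟨d, rfl⟩ := Nat.exists_eq_add_of_le hg₂
  rw [show g₁.natDegree + c + (g₂.natDegree + d) = g₁.natDegree + g₂.natDegree + (c + d) by ring,
    resultant_add_right_deg _ _ _ _ _ natDegree_mul_le, resultant_add_right_deg _ _ _ _ _ le_rfl,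
    resultant_add_right_deg _ _ _ _ _ le_rfl, resultant_mul_right _ _ _ _ hm, h1]
  simp

/-- Modulo `f`, the polynomial `X * (X + a) * f'` is minus the quadratic
`(n - 1) * b * X ^ 2 + (n * t + (n - 2) * a * b) * X + (n - 1) * a * t`. Taking resultants with `f`
expresses `Res(f, f')` through the values of `f` at the roots `β₁, β₂` of that quadratic. -/
lemma resultant_mul_eq_eval {R : Type*} [CommRing R] (k : ℕ) (a b t β₁ β₂ : R)
    (hs : (2 * k + 1) * b * (β₁ + β₂) = -((2 * k + 2) * t + 2 * k * (a * b)))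
    (hp : (2 * k + 1) * b * (β₁ * β₂) = (2 * k + 1) * (a * t)) :
    t * (t - a * b) *
        Polynomial.resultant (quadrinomial k a b t) (derivative (quadrinomial k a b t))
          (2 * k + 2) (2 * k + 1)
      = ((2 * k + 1) * b) ^ (2 * k + 2) *
        ((quadrinomial k a b t).eval β₁ * (quadrinomial k a b t).eval β₂) := by
  have hd := natDegree_quadrinomial_le k a b t
  have hd' := natDegree_derivative_quadrinomial_le k a b t
  have hc := coeff_quadrinomial k a b t
  have hder := derivative_quadrinomial k a b t
  set f := quadrinomial k a b t with hf
  have hev : Even (2 * k + 2) := ⟨k + 1, by ring⟩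
  have hX (r : R) : (X - C r).natDegree ≤ 1 := by compute_degree
  have hlhs : Polynomial.resultant f ((X - C 0) * (X - C (-a)) * derivative f)
      (2 * k + 2) (1 + 1 + (2 * k + 1))
      = t * (t - a * b) * Polynomial.resultant f (derivative f) (2 * k + 2) (2 * k + 1) := by
    rw [resultant_mul_right_of_le _ _ _ _ _ _ hd hc
        (natDegree_mul_le.trans (add_le_add (hX _) (hX _))) hd',
      resultant_mul_right_of_le _ _ _ _ _ _ hd hc (hX _) (hX _),
      resultant_X_sub_C_right _ _ _ hd, resultant_X_sub_C_right _ _ _ hd, hev.neg_one_pow]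
    have e0 : f.eval 0 = t := by simp [hf, quadrinomial]
    have e1 : f.eval (-a) = t - a * b := by
      simp only [hf, quadrinomial, eval_add, eval_mul, eval_pow, eval_X, eval_C]
      ring
    rw [e0, e1]; ring
  have hrhs : Polynomial.resultant f (C (-((2 * k + 1) * b)) * ((X - C β₁) * (X - C β₂)))
      (2 * k + 2) (1 + 1) = ((2 * k + 1) * b) ^ (2 * k + 2) * (f.eval β₁ * f.eval β₂) := by
    rw [resultant_C_mul_right, resultant_mul_right_of_le _ _ _ _ _ _ hd hc (hX _) (hX _),
      resultant_X_sub_C_right _ _ _ hd, resultant_X_sub_C_right _ _ _ hd, hev.neg_one_pow,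
      hev.neg_pow]
    ring
  have key : (X - C 0) * (X - C (-a)) * derivative f
      = C (-((2 * k + 1) * b)) * ((X - C β₁) * (X - C β₂))
        + f * (C (2 * k + 2 : R) * X + C ((2 * k + 1) * a)) := by
    have hs' := congrArg (C : R → R[X]) hs
    have hp' := congrArg (C : R → R[X]) hp
    rw [hder, hf, quadrinomial]
    simp only [map_mul, map_add, map_neg, map_one, map_natCast, map_ofNat, map_zero] at hs' hp' ⊢
    linear_combination -X * hs' + hp'
  have hq : (C (-((2 * k + 1) * b)) * ((X - C β₁) * (X - C β₂))).natDegree ≤ 1 + 1 :=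
    (natDegree_C_mul_le _ _).trans (natDegree_mul_le.trans (add_le_add (hX _) (hX _)))
  rw [← hlhs, key, resultant_add_mul_right _ _ _ _ _ _ hd,
    resultant_add_right_deg _ _ _ _ _ hq, hc, one_pow, one_mul, hrhs]
  have : (C (2 * k + 2 : R) * X + C ((2 * k + 1) * a)).natDegree ≤ 1 := by compute_degree
  omega

/-- Evaluation of the product in `resultant_mul_eq_eval`. The mixed terms combine to
`t * (γ₁ ^ (2 * k) * δ₁ ^ 2 + γ₂ ^ (2 * k) * δ₂ ^ 2)`, and the bracket is
`(γ₁ ^ k * δ₁ + γ₂ ^ k * δ₂) ^ 2 - 2 * (γ₁ * γ₂) ^ k * (δ₁ * δ₂)`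
for `γᵢ = (n - 1) * b * βᵢ` and `δᵢ = γᵢ + (n - 1) * a * b`. -/
lemma eval_mul_eval {K : Type*} [Field K] [CharZero K] (k : ℕ) (a b t β₁ β₂ : K)
    (hs : (2 * k + 1) * b * (β₁ + β₂) = -((2 * k + 2) * t + 2 * k * (a * b)))
    (hp : (2 * k + 1) * b * (β₁ * β₂) = (2 * k + 1) * (a * t)) :
    ((2 * k + 1) * b) ^ (2 * k + 2) *
        ((quadrinomial k a b t).eval β₁ * (quadrinomial k a b t).eval β₂)
      = t * (a * b - t) * ((2 * k + 1) ^ (2 * k + 1) * (a ^ (2 * k + 2) * t ^ (2 * k)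
          + b ^ (2 * k + 2))
        + 4 * (a * b - t) * halfSum (k + 1 : K) a b t k ^ 2
        - 2 * (2 * k + 1) ^ (2 * k + 1) * (a * b) ^ (k + 1) * t ^ k) := by
  have hN : (2 * k + 1 : K) ≠ 0 := by
    have h := Nat.cast_ne_zero (R := K).2 (Nat.succ_ne_zero (2 * k))
    push_cast at h
    exact h
  have hp0 : b * (β₁ * β₂) = a * t := mul_left_cancel₀ hN (by linear_combination hp)
  have hV := sum_eq_halfSum (k + 1 : K) a b t ((2 * k + 1) * b * β₁) ((2 * k + 1) * b * β₂)
    (by linear_combination hs) (by linear_combination (2 * k + 1) * b * hp) k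
  have hz : b ^ k * (β₁ ^ k * β₂ ^ k) = a ^ k * t ^ k := by
    rw [← mul_pow, ← mul_pow, hp0, mul_pow]
  simp only [mul_pow] at hV
  have e (β : K) : (quadrinomial k a b t).eval β
      = (β ^ k) ^ 2 * (β * (β + a)) + (b * β + t) := by
    simp only [quadrinomial, eval_add, eval_mul, eval_pow, eval_X, eval_C]; ring
  rw [e, e]
  have hA : (2 * k + 1) * b * ((β₁ + a) * (β₂ + a)) = a * (a * b - t) := by
    linear_combination hp + a * hs
  have hB : (2 * k + 1) * ((b * β₁ + t) * (b * β₂ + t)) = t * (a * b - t) := by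
    linear_combination b * hp + t * hs
  have r1 : ((2 * k + 1 : K) * b) ^ (2 * k + 2)
      = ((2 * k + 1 : K) ^ k) ^ 2 * (b ^ k) ^ 2 * ((2 * k + 1) * b) ^ 2 := by
    rw [mul_pow]; ring
  have r2 : (2 * k + 1 : K) ^ (2 * k + 1) = ((2 * k + 1 : K) ^ k) ^ 2 * (2 * k + 1) := by ring
  have r3 : a ^ (2 * k + 2) * t ^ (2 * k) = (a ^ k * t ^ k) ^ 2 * a ^ 2 := by ring
  have r4 : b ^ (2 * k + 2) = (b ^ k) ^ 2 * b ^ 2 := by ring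
  have r5 : (a * b) ^ (k + 1) * t ^ k = (a ^ k * t ^ k) * b ^ k * (a * b) := by ring
  rw [r1, r2, r3, r4, mul_assoc _ ((a * b) ^ (k + 1)), r5]
  rw [show 2 * (k + 1 : K) - 1 = 2 * k + 1 by ring] at hV
  clear e r1 r2 r3 r4 r5 hs hp hN
  generalize halfSum (k + 1 : K) a b t k = V at *
  generalize (2 * k + 1 : K) ^ k = N' at *
  generalize (2 * k + 1 : K) = N at *
  generalize a ^ k * t ^ k = A at *
  generalize b ^ k = B at *
  generalize β₁ ^ k = y₁ at *
  generalize β₂ ^ k = y₂ at *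
  have T1 : N' ^ 2 * B ^ 2 * (N * b) ^ 2 * (y₁ ^ 2 * (β₁ * (β₁ + a)) * (y₂ ^ 2 * (β₂ * (β₂ + a))))
      = N' ^ 2 * N * A ^ 2 * a ^ 2 * t * (a * b - t) := by
    calc _ = N' ^ 2 * N * (B * (y₁ * y₂)) ^ 2 * (b * (β₁ * β₂))
          * (N * b * ((β₁ + a) * (β₂ + a))) := by ring
      _ = _ := by rw [hz, hp0, hA]; ring
  have T3 : N' ^ 2 * B ^ 2 * (N * b) ^ 2 * ((b * β₁ + t) * (b * β₂ + t))
      = N' ^ 2 * N * B ^ 2 * b ^ 2 * t * (a * b - t) := by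
    linear_combination N' ^ 2 * B ^ 2 * N * b ^ 2 * hB
  have T2 : N' ^ 2 * B ^ 2 * (N * b) ^ 2 * (y₁ ^ 2 * (β₁ * (β₁ + a)) * (b * β₂ + t)
        + y₂ ^ 2 * (β₂ * (β₂ + a)) * (b * β₁ + t))
      = t * ((2 * (a * b - t) * V) ^ 2 - 2 * (N' ^ 2 * N * (a * b) * (A * B) * (a * b - t))) := by
    have hW : N' ^ 2 * B ^ 2 * (N * b) ^ 2 * (y₁ * y₂) * ((β₁ + a) * (β₂ + a))
        = N' ^ 2 * N * (a * b) * (A * B) * (a * b - t) := by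
      calc _ = N' ^ 2 * N * b * B * (B * (y₁ * y₂)) * (N * b * ((β₁ + a) * (β₂ + a))) := by ring
        _ = _ := by rw [hz, hA]; ring
    rw [← hW, ← hV]
    linear_combination N' ^ 2 * B ^ 2 * (N * b) ^ 2
      * (y₁ ^ 2 * (β₁ + a) + y₂ ^ 2 * (β₂ + a)) * hp0
  linear_combination T1 + T2 + T3

/-- Existence of the roots `β₁, β₂` of the auxiliary quadratic. -/
lemma exists_quadratic_roots {K : Type*} [Field K] [CharZero K] [IsAlgClosed K] (k : ℕ)
    (a b t : K) (hb : b ≠ 0) :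
    ∃ β₁ β₂ : K,
      (2 * k + 1) * b * (β₁ + β₂) = -((2 * k + 2) * t + 2 * k * (a * b)) ∧
      (2 * k + 1) * b * (β₁ * β₂) = (2 * k + 1) * (a * t) := by
  have hN : (2 * k + 1 : K) ≠ 0 := by exact_mod_cast Nat.succ_ne_zero (2 * k)
  obtain ⟨d, hd⟩ := IsAlgClosed.exists_pow_nat_eq
    (((2 * k + 2) * t + 2 * k * (a * b)) ^ 2 - 4 * (2 * k + 1) ^ 2 * (a * b * t))
    (n := 2) (by norm_num)
  refine ⟨(-((2 * k + 2) * t + 2 * k * (a * b)) + d) / (2 * ((2 * k + 1) * b)),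
    (-((2 * k + 2) * t + 2 * k * (a * b)) - d) / (2 * ((2 * k + 1) * b)), ?_, ?_⟩
  · field_simp; ring
  · field_simp; linear_combination -hd

lemma sq_congr {R : Type*} [CommRing R] {V W : R} (h : (2 : R) ∣ V - W) (c : R) :
    (8 : R) ∣ 4 * c * V ^ 2 - 4 * c * W ^ 2 := by
  obtain ⟨w, hw⟩ := h
  exact ⟨c * w * (V + W), by linear_combination 4 * c * (V + W) * hw⟩

/-- An exact formula for `Res(f, f')`, obtained by passing to an algebraic closure of
`ℚ(a, b, t)`, where the auxiliary quadratic splits. -/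
lemma resultant_formula (k : ℕ) :
    let a : MvPolynomial (Fin 3) ℤ := MvPolynomial.X 0
    let b : MvPolynomial (Fin 3) ℤ := MvPolynomial.X 1
    let t : MvPolynomial (Fin 3) ℤ := MvPolynomial.X 2
    Polynomial.resultant (quadrinomial k a b t) (derivative (quadrinomial k a b t))
        (2 * k + 2) (2 * k + 1)
      = -((2 * k + 1) ^ (2 * k + 1) * (a ^ (2 * k + 2) * t ^ (2 * k) + b ^ (2 * k + 2))
        + 4 * (a * b - t) * halfSum (k + 1 : MvPolynomial (Fin 3) ℤ) a b t k ^ 2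
        - 2 * (2 * k + 1) ^ (2 * k + 1) * (a * b) ^ (k + 1) * t ^ k) := by
  intro a b t
  let K := AlgebraicClosure (FractionRing (MvPolynomial (Fin 3) ℤ))
  let φ : MvPolynomial (Fin 3) ℤ →+* K :=
    (algebraMap (FractionRing (MvPolynomial (Fin 3) ℤ)) K).comp (algebraMap _ _)
  have hφ : Function.Injective φ :=
    (algebraMap (FractionRing (MvPolynomial (Fin 3) ℤ)) K).injective.comp
      (IsFractionRing.injective _ _)
  have : CharZero (FractionRing (MvPolynomial (Fin 3) ℤ)) :=
    charZero_of_injective_algebraMap (IsFractionRing.injective (MvPolynomial (Fin 3) ℤ) _)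
  have : CharZero K :=
    charZero_of_injective_algebraMap (algebraMap (FractionRing (MvPolynomial (Fin 3) ℤ)) K).injective
  have hb : φ b ≠ 0 := (map_ne_zero_iff φ hφ).2 (MvPolynomial.X_ne_zero _)
  have ht : φ t ≠ 0 := (map_ne_zero_iff φ hφ).2 (MvPolynomial.X_ne_zero _)
  have htab : φ t - φ a * φ b ≠ 0 := by
    rw [← map_mul, ← map_sub]
    refine (map_ne_zero_iff φ hφ).2 fun h => ?_
    have := congrArg (MvPolynomial.eval ![(0 : ℤ), 0, 1]) h
    simp [a, b, t] at this
  obtain ⟨β₁, β₂, hs, hp⟩ := exists_quadratic_roots k (φ a) (φ b) (φ t) hb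
  have h := (resultant_mul_eq_eval k (φ a) (φ b) (φ t) β₁ β₂ hs hp).trans
    (eval_mul_eval k (φ a) (φ b) (φ t) β₁ β₂ hs hp)
  have hq : quadrinomial k (φ a) (φ b) (φ t) = (quadrinomial k a b t).map φ := by
    simp [quadrinomial]
  rw [hq, derivative_map, resultant_map_map] at h
  apply hφ
  apply mul_left_cancel₀ (mul_ne_zero ht htab)
  rw [h]
  simp only [map_neg, map_sub, map_add, map_mul, map_pow, map_halfSum, map_one, map_ofNat,
    map_natCast]
  ring

/-- The coefficient `(n - 1) ^ (n - 1)` is `(-1) ^ (m + 1)` modulo `4`, for `n = 2 * m`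
and `m = k + 1`. -/
lemma four_dvd_pow (k : ℕ) : (4 : ℤ) ∣ (2 * k + 1) ^ (2 * k + 1) - (-1) ^ k := by
  have h : (4 : ℤ) ∣ (2 * k + 1) ^ 2 - 1 := ⟨k * k + k, by ring⟩
  have h1 : (4 : ℤ) ∣ ((2 * k + 1) ^ 2) ^ k - 1 := by
    simpa using h.trans (sub_dvd_pow_sub_pow ((2 * k + 1 : ℤ) ^ 2) 1 k)
  have h2 : (4 : ℤ) ∣ (2 * k + 1) - (-1) ^ k := by
    rcases Nat.even_or_odd' k with ⟨c, rfl | rfl⟩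
    · rw [(even_two_mul c).neg_one_pow]; exact ⟨c, by push_cast; ring⟩
    · rw [(odd_two_mul_add_one c).neg_one_pow]; exact ⟨c + 1, by push_cast; ring⟩
  rw [show (2 * k + 1 : ℤ) ^ (2 * k + 1) - (-1) ^ k
    = (2 * k + 1) * (((2 * k + 1) ^ 2) ^ k - 1) + ((2 * k + 1) - (-1) ^ k) by
      rw [pow_succ, pow_mul]; ring]
  exact dvd_add (h1.mul_left _) h2

theorem disc_mod_eight
    (m : ℕ) (hm : 2 ≤ m) (n : ℕ) (hn : n = 2 * m) :
    -- work in `ℤ[a, b, t]`, with `a`, `b`, `t` the three variables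
    let a : MvPolynomial (Fin 3) ℤ := MvPolynomial.X 0
    let b : MvPolynomial (Fin 3) ℤ := MvPolynomial.X 1
    let t : MvPolynomial (Fin 3) ℤ := MvPolynomial.X 2
    -- `f = x^n + a x^{n-1} + b x + t`
    let f : Polynomial (MvPolynomial (Fin 3) ℤ) :=
      X ^ n + C a * X ^ (n - 1) + C b * X + C t
    let disc : MvPolynomial (Fin 3) ℤ :=
      (-1) ^ (n * (n - 1) / 2) * resultant n (n - 1) f (derivative f)
    (8 : MvPolynomial (Fin 3) ℤ) ∣
      disc - ((-1) ^ (m + 1) * ((n : MvPolynomial (Fin 3) ℤ) - 1) ^ (n - 1) *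
          (a ^ n * t ^ (n - 2) + b ^ n)
        + 2 * a ^ m * b ^ m * t ^ (m - 1)
        + 4 * (if Even m then a ^ (m + 1) * b ^ (m + 1) * t ^ (m - 2)
               else a ^ (m - 1) * b ^ (m - 1) * t ^ m)) := by
  intro a b t f disc
  obtain ⟨k, rfl⟩ : ∃ k, m = k + 1 := ⟨m - 1, by omega⟩
  subst hn
  have hform := resultant_formula k
  have hdisc : disc = (-1) ^ k *
      ((2 * k + 1) ^ (2 * k + 1) * (a ^ (2 * k + 2) * t ^ (2 * k) + b ^ (2 * k + 2))
        + 4 * (a * b - t) * halfSum (k + 1 : MvPolynomial (Fin 3) ℤ) a b t k ^ 2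
        - 2 * (2 * k + 1) ^ (2 * k + 1) * (a * b) ^ (k + 1) * t ^ k) := by
    have h1 : (2 * (k + 1)) * (2 * (k + 1) - 1) / 2 = 2 * (k * (k + 1)) + (k + 1) := by
      rw [mul_assoc, Nat.mul_div_cancel_left _ (by norm_num),
        show 2 * (k + 1) - 1 = 2 * k + 1 by omega]
      ring
    change (-1) ^ _ * _root_.resultant (2 * k + 2) (2 * k + 1) (quadrinomial k a b t)
      (derivative (quadrinomial k a b t)) = _
    rw [resultant_eq_polynomial_resultant _ _ _ _ (natDegree_quadrinomial_le ..)
      (natDegree_derivative_quadrinomial_le ..), hform, h1]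
    simp only [pow_add, pow_mul, pow_one]
    simp
    ring
  obtain ⟨u, hu⟩ := four_dvd_pow k
  have hu' : (2 * k + 1 : MvPolynomial (Fin 3) ℤ) ^ (2 * k + 1) = (-1) ^ k + 4 * u := by
    have := congrArg (Int.cast : ℤ → MvPolynomial (Fin 3) ℤ) hu
    push_cast at this
    linear_combination this
  rw [hdisc]
  have e1 : 2 * (k + 1) - 1 = 2 * k + 1 := by omega
  have e2 : 2 * (k + 1) - 2 = 2 * k := by omega
  rw [e1, e2, show 2 * (k + 1) = 2 * k + 2 by ring, show k + 1 - 1 = k by omega]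
  have hcast : ((2 * k + 2 : ℕ) : MvPolynomial (Fin 3) ℤ) - 1 = 2 * k + 1 := by push_cast; ring
  rw [hcast]
  generalize (2 * k + 1 : MvPolynomial (Fin 3) ℤ) ^ (2 * k + 1) = P at *
  subst hu'
  rcases Nat.even_or_odd' k with ⟨j, rfl | rfl⟩
  · have hV := two_dvd_halfSum_even (((2 * j : ℕ) : MvPolynomial (Fin 3) ℤ) + 1) a b t j
    generalize halfSum (((2 * j : ℕ) : MvPolynomial (Fin 3) ℤ) + 1) a b t (2 * j) = V at *
    have hV' : (2 : MvPolynomial (Fin 3) ℤ) ∣ V - (a * b * t) ^ j := by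
      obtain ⟨w, hw⟩ := hV
      exact ⟨w + (a * b * t) ^ j * j, by push_cast at hw; linear_combination hw⟩
    obtain ⟨z, hz⟩ := sq_congr hV' (a * b - t)
    rw [if_neg (by simp)]
    simp only [(even_two_mul j).neg_one_pow, (even_two_mul j).add_one.add_one.neg_one_pow]
    exact ⟨z - u * (a * b) ^ (2 * j + 1) * t ^ (2 * j)
      - a ^ (2 * j) * b ^ (2 * j) * t ^ (2 * j + 1), by linear_combination hz⟩
  · have hV := two_dvd_halfSum_odd (((2 * j + 1 : ℕ) : MvPolynomial (Fin 3) ℤ) + 1) a b t j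
    generalize halfSum (((2 * j + 1 : ℕ) : MvPolynomial (Fin 3) ℤ) + 1) a b t (2 * j + 1) = V at *
    have hV' : (2 : MvPolynomial (Fin 3) ℤ) ∣ V - (a * b * t) ^ j * (a * b) := by
      obtain ⟨w, hw⟩ := hV
      exact ⟨w + (a * b * t) ^ j * (a * b) * (j + 1), by push_cast at hw; linear_combination hw⟩
    obtain ⟨z, hz⟩ := sq_congr hV' (a * b - t)
    rw [if_pos (by simp [Nat.even_add_one]), show 2 * j + 1 + 1 - 2 = 2 * j by omega]
    have ho := odd_two_mul_add_one j
    simp only [ho.neg_one_pow, ho.add_one.add_one.neg_one_pow]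
    exact ⟨-z + u * (a * b) ^ (2 * j + 2) * t ^ (2 * j + 1)
      - a ^ (2 * j + 3) * b ^ (2 * j + 3) * t ^ (2 * j), by linear_combination -hz⟩
end
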